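/- arXiv:2005.12009 — 3 statements merged into one kernel-verified Lean document; each statement's English description precedes it below -/
import Mathlib

section
/- For every m̄ ∈ ℕ and every c̄ ≥ 1 there exists a constant C > 0 (depending only on m̄ and c̄) with the following property: let 𝒯 be a mesh of a compact interval [a,b] that is piecewise quasi-uniform with parameters (m̄, c̄), with a partition of its elements into at most m̄ blocks of consecutive elements, each block having element-length ratio at most c̄. Let v ∈ 𝕊_1(𝒯) be a continuous piecewise linear function that vanishes at every node of 𝒯 except possibly at the endpoints of the blocks (of which there are at most m̄ + 1). Then ∫_a^b ∫_a^b (v(x) − v(y))²/(x − y)² dx dy ≤ C · log(1 + R(𝒯)) · (sup_{x ∈ [a,b]} |v(x)|)², where R(𝒯) is the ratio of the largest to the smallest element length of 𝒯. -/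
open MeasureTheory Set
open scoped ENNReal NNReal

/-!
Substituting `t = s + u` turns the Gagliardo energy of `v` into `∫ D(u) / u² du`, where
`D(u) = ∫ |v(s + u) - v(s)|² ds`. Let `P` and `Q` be the smallest and the largest element length,
`M` the supremum of `|v|` and `V` the total variation of `v`. Then
`D(u) ≤ sup_s |v(s + u) - v(s)| · |u| V` with `sup_s |v(s + u) - v(s)| ≤ 2M min(1, |u| / P)`, and
also `D(u) ≤ 4 ∫ v²`. Both `V` and `∫ v²` are controlled by the few nonzero nodal values of `v`, by
`V ≲ M` and `∫ v² ≲ Q M²`, so `D(u) / u² ≲ M² min(1 / P, 1 / |u|, Q / u²)`. The integral of this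
kernel over `ℝ` is `2 (2 + log (Q / P))`.
-/

section Variation

variable {E : Type*} [PseudoEMetricSpace E]

theorem tsum_int_edist_le_eVariationOn {α : Type*} [LinearOrder α] (f : α → E)
    {s : Set α} {x : ℤ → α} (hx : Monotone x) (hxs : ∀ k, x k ∈ s) :
    ∑' k : ℤ, edist (f (x (k + 1))) (f (x k)) ≤ eVariationOn f s := by
  rw [ENNReal.tsum_eq_iSup_sum]
  refine iSup_le fun F => ?_
  set n : ℕ := F.sup Int.natAbs + 1
  have subset_window : F ⊆ (Finset.range (2 * n)).image fun i : ℕ => (i : ℤ) - n := by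
    intro k hk
    have := Finset.le_sup (f := Int.natAbs) hk
    exact Finset.mem_image.mpr ⟨(k + n).toNat, Finset.mem_range.mpr (by omega), by omega⟩
  calc ∑ k ∈ F, edist (f (x (k + 1))) (f (x k))
      ≤ ∑ k ∈ (Finset.range (2 * n)).image fun i : ℕ => (i : ℤ) - n,
          edist (f (x (k + 1))) (f (x k)) := Finset.sum_le_sum_of_subset subset_window
    _ = ∑ i ∈ Finset.range (2 * n), edist (f (x ((i + 1 : ℕ) - n))) (f (x (i - n))) := by
        rw [Finset.sum_image (by intro i _ j _; simp)]
        push_cast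
        simp only [add_sub_right_comm]
    _ ≤ eVariationOn f s :=
        eVariationOn.sum_le (u := fun i : ℕ => x (i - n)) (fun i j hij => hx (by omega))
          fun i => hxs _

theorem eVariationOn_Icc_le_of_lipschitzOnWith {f : ℝ → E} {K : ℝ≥0} {x y : ℝ}
    (hf : LipschitzOnWith K f (Icc x y)) :
    eVariationOn f (Icc x y) ≤ ENNReal.ofReal (K * (y - x)) := by
  have eVariationOn_id : eVariationOn (id : ℝ → ℝ) (Icc x y) = ENNReal.ofReal (y - x) := by simp
  calc eVariationOn f (Icc x y) ≤ K * eVariationOn (id : ℝ → ℝ) (Icc x y) :=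
        hf.comp_eVariationOn_le (mapsTo_id _)
    _ = ENNReal.ofReal (K * (y - x)) := by
        rw [eVariationOn_id, ENNReal.ofReal_mul K.coe_nonneg, ENNReal.ofReal_coe_nnreal]

theorem lipschitzOnWith_Icc_trans {f : ℝ → E} {K : ℝ≥0} {x y z : ℝ}
    (hxy : LipschitzOnWith K f (Icc x y)) (hyz : LipschitzOnWith K f (Icc y z)) :
    LipschitzOnWith K f (Icc x z) := by
  suffices ordered : ∀ s ∈ Icc x z, ∀ t ∈ Icc x z, s ≤ t → edist (f s) (f t) ≤ K * edist s t by
    intro s hs t ht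
    rcases le_total s t with hst | hts
    · exact ordered s hs t ht hst
    · simpa only [edist_comm] using ordered t ht s hs hts
  intro s hs t ht hst
  rcases le_total t y with hty | hyt
  · exact hxy ⟨hs.1, hst.trans hty⟩ ⟨ht.1, hty⟩
  rcases le_total y s with hys | hsy
  · exact hyz ⟨hys, hs.2⟩ ⟨hyt, ht.2⟩
  calc edist (f s) (f t) ≤ edist (f s) (f y) + edist (f y) (f t) := edist_triangle _ _ _
    _ ≤ K * edist s y + K * edist y t :=
        add_le_add (hxy ⟨hs.1, hsy⟩ ⟨hs.1.trans hsy, le_rfl⟩)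
          (hyz ⟨le_rfl, hyt.trans ht.2⟩ ⟨hyt, ht.2⟩)
    _ = K * edist s t := by
        rw [← mul_add, edist_dist, edist_dist, edist_dist,
          ← ENNReal.ofReal_add dist_nonneg dist_nonneg,
          Real.dist_eq, Real.dist_eq, Real.dist_eq, abs_of_nonpos (by linarith),
          abs_of_nonpos (by linarith), abs_of_nonpos (by linarith)]
        congr 2
        ring

variable [MeasurableSpace E] [OpensMeasurableSpace E] [SecondCountableTopology E]

-- Cut `ℝ` into translates of `(0, u]`: for each `s ∈ (0, u]` the increments along `s + ℤu` are
-- the terms of a variation sum.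
theorem lintegral_edist_add_right_le_of_pos {f : ℝ → E} (hf : Measurable f) {u : ℝ} (hu : 0 < u) :
    ∫⁻ s, edist (f (s + u)) (f s) ≤ ENNReal.ofReal u * eVariationOn f univ := by
  have tile := (isAddFundamentalDomain_Ioc hu 0).lintegral_eq_tsum'' fun s =>
    edist (f (s + u)) (f s)
  have zsmul_inj : Function.Injective fun k : ℤ => k • u := (zsmul_left_strictMono hu).injective
  have sum_le (s : ℝ) :
      ∑' k : ℤ, edist (f (s + (k + 1 : ℤ) * u)) (f (s + k * u)) ≤ eVariationOn f univ := by
    refine tsum_int_edist_le_eVariationOn f (x := fun k => s + k * u) (fun i j hij => ?_)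
      fun _ => mem_univ _
    dsimp only
    gcongr
  calc ∫⁻ s, edist (f (s + u)) (f s)
      = ∑' k : ℤ, ∫⁻ s in Ioc 0 u, edist (f (s + (k + 1 : ℤ) * u)) (f (s + k * u)) := by
        rw [tile, zero_add]
        refine ((Equiv.ofInjective _ zsmul_inj).tsum_eq _).symm.trans ?_
        refine tsum_congr fun k => lintegral_congr fun s => ?_
        have add_right : k • u + s + u = s + (k + 1 : ℤ) * u := by push_cast [zsmul_eq_mul]; ring
        have add_left : k • u + s = s + k * u := by rw [zsmul_eq_mul, add_comm]
        exact congrArg₂ (fun x y => edist (f x) (f y)) add_right add_left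
    _ = ∫⁻ s in Ioc 0 u, ∑' k : ℤ, edist (f (s + (k + 1 : ℤ) * u)) (f (s + k * u)) :=
        (lintegral_tsum fun k => by fun_prop).symm
    _ ≤ ∫⁻ _ in Ioc 0 u, eVariationOn f univ := lintegral_mono sum_le
    _ = ENNReal.ofReal u * eVariationOn f univ := by
        rw [setLIntegral_const, Real.volume_Ioc, sub_zero, mul_comm]

theorem lintegral_edist_add_right_le {f : ℝ → E} (hf : Measurable f) (u : ℝ) :
    ∫⁻ s, edist (f (s + u)) (f s) ≤ ENNReal.ofReal |u| * eVariationOn f univ := by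
  rcases lt_trichotomy u 0 with hu | rfl | hu
  · rw [abs_of_neg hu, ← lintegral_add_right_eq_self _ (-u)]
    simpa only [neg_add_cancel_right, edist_comm] using
      lintegral_edist_add_right_le_of_pos hf (neg_pos.mpr hu)
  · simp
  · rw [abs_of_pos hu]
    exact lintegral_edist_add_right_le_of_pos hf hu

end Variation

section Kernel

theorem lintegral_comp_abs (g : ℝ → ℝ≥0∞) : ∫⁻ u, g |u| = 2 * ∫⁻ u in Ioi 0, g u := by
  have right_half : ∫⁻ u in Ioi (0 : ℝ), g |u| = ∫⁻ u in Ioi 0, g u :=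
    setLIntegral_congr_fun measurableSet_Ioi fun u hu => by rw [abs_of_pos hu]
  have left_half : ∫⁻ u in Iio (0 : ℝ), g |u| = ∫⁻ u in Ioi 0, g u := by
    rw [← right_half, ← (Measure.measurePreserving_neg volume).setLIntegral_comp_preimage_emb
      (MeasurableEquiv.neg ℝ).measurableEmbedding (fun u => g |u|) (Iio 0)]
    simp
  rw [← lintegral_add_compl _ (A := Ioi 0) measurableSet_Ioi, compl_Ioi,
    setLIntegral_congr Iio_ae_eq_Iic.symm, right_half, left_half, two_mul]

theorem lintegral_Ioc_inv {P Q : ℝ} (hP : 0 < P) (hPQ : P ≤ Q) :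
    ∫⁻ u in Ioc P Q, ENNReal.ofReal u⁻¹ = ENNReal.ofReal (Real.log (Q / P)) := by
  have integrable_inv : IntegrableOn (fun u : ℝ => u⁻¹) (Ioc P Q) :=
    (intervalIntegrable_iff_integrableOn_Ioc_of_le hPQ).mp <|
      intervalIntegrable_inv_iff.mpr
        (.inr (notMem_uIcc_of_lt hP (hP.trans_le hPQ)))
  rw [← ofReal_integral_eq_lintegral_ofReal integrable_inv, ← intervalIntegral.integral_of_le hPQ,
    integral_inv_of_pos hP (hP.trans_le hPQ)]
  filter_upwards [ae_restrict_mem measurableSet_Ioc] with u hu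
  exact inv_nonneg.mpr (hP.trans hu.1).le

theorem lintegral_Ioi_div_sq {Q : ℝ} (hQ : 0 < Q) :
    ∫⁻ u in Ioi Q, ENNReal.ofReal (Q / u ^ 2) = 1 := by
  have integrand_eq : EqOn (fun u : ℝ => Q / u ^ 2) (fun u => Q * u ^ (-2 : ℝ)) (Ioi Q) := by
    intro u hu
    simp [Real.rpow_neg (hQ.trans hu).le, div_eq_mul_inv]
  have integrable_div_sq : IntegrableOn (fun u : ℝ => Q / u ^ 2) (Ioi Q) :=
    IntegrableOn.congr_fun
      (Integrable.const_mul (integrableOn_Ioi_rpow_of_lt (by norm_num) hQ) Q)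
      integrand_eq.symm measurableSet_Ioi
  rw [← ofReal_integral_eq_lintegral_ofReal integrable_div_sq (.of_forall fun u => by positivity),
    setIntegral_congr_fun measurableSet_Ioi integrand_eq, integral_const_mul,
    integral_Ioi_rpow_of_lt (by norm_num) hQ]
  norm_num [Real.rpow_neg_one, hQ.ne']

theorem lintegral_min_inv_div_sq_le {P Q : ℝ} (hP : 0 < P) (hPQ : P ≤ Q) :
    ∫⁻ u, ENNReal.ofReal (min (min P⁻¹ |u|⁻¹) (Q / |u| ^ 2)) ≤
      ENNReal.ofReal (2 * (2 + Real.log (Q / P))) := by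
  have hQ : 0 < Q := hP.trans_le hPQ
  have log_nonneg : 0 ≤ Real.log (Q / P) := Real.log_nonneg ((one_le_div₀ hP).mpr hPQ)
  set g : ℝ → ℝ≥0∞ := fun u => ENNReal.ofReal (min (min P⁻¹ u⁻¹) (Q / u ^ 2))
  have near : ∫⁻ u in Ioc 0 P, g u ≤ 1 :=
    calc ∫⁻ u in Ioc 0 P, g u ≤ ∫⁻ _ in Ioc 0 P, ENNReal.ofReal P⁻¹ := by
          refine lintegral_mono fun u => ENNReal.ofReal_le_ofReal ?_
          exact (min_le_left _ _).trans (min_le_left _ _)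
      _ = 1 := by
          rw [setLIntegral_const, Real.volume_Ioc, sub_zero,
            ← ENNReal.ofReal_mul (inv_nonneg.mpr hP.le), inv_mul_cancel₀ hP.ne', ENNReal.ofReal_one]
  have middle : ∫⁻ u in Ioc P Q, g u ≤ ENNReal.ofReal (Real.log (Q / P)) := by
    rw [← lintegral_Ioc_inv hP hPQ]
    refine lintegral_mono fun u => ENNReal.ofReal_le_ofReal ?_
    exact (min_le_left _ _).trans (min_le_right _ _)
  have far : ∫⁻ u in Ioi Q, g u ≤ 1 := by
    rw [← lintegral_Ioi_div_sq hQ]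
    exact lintegral_mono fun u => ENNReal.ofReal_le_ofReal (min_le_right _ _)
  calc ∫⁻ u, g |u| = 2 * ∫⁻ u in Ioc 0 P ∪ Ioc P Q ∪ Ioi Q, g u := by
        rw [lintegral_comp_abs, Ioc_union_Ioc_eq_Ioc hP.le hPQ, Ioc_union_Ioi_eq_Ioi hQ.le]
    _ ≤ 2 * ((∫⁻ u in Ioc 0 P, g u) + (∫⁻ u in Ioc P Q, g u) + ∫⁻ u in Ioi Q, g u) := by
        gcongr
        exact (lintegral_union_le _ _ _).trans (by gcongr; exact lintegral_union_le _ _ _)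
    _ ≤ 2 * (1 + ENNReal.ofReal (Real.log (Q / P)) + 1) := by gcongr
    _ = ENNReal.ofReal (2 * (2 + Real.log (Q / P))) := by
        rw [ENNReal.ofReal_mul zero_le_two, ENNReal.ofReal_add zero_le_two log_nonneg,
          ENNReal.ofReal_ofNat, add_right_comm, one_add_one_eq_two]

theorem two_add_log_le_five_mul_log_one_add {x : ℝ} (hx : 1 ≤ x) :
    2 + Real.log x ≤ 5 * Real.log (1 + x) := by
  have log_two_le : Real.log 2 ≤ Real.log (1 + x) := Real.log_le_log two_pos (by linarith)
  have log_le : Real.log x ≤ Real.log (1 + x) := Real.log_le_log (by linarith) (by linarith)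
  linarith [Real.log_two_gt_d9]

end Kernel

section GagliardoEnergy

/-- The squared `H^{1/2}` (Gagliardo) seminorm of `f` on `I`, with values in `[0, ∞]`. -/
noncomputable def gagliardoEnergy (f : ℝ → ℝ) (I : Set ℝ) : ℝ≥0∞ :=
  ∫⁻ s in I, ∫⁻ t in I, ENNReal.ofReal ((f s - f t) ^ 2 / (s - t) ^ 2)

/-- The squared `L²` norm of the increment `f (· + u) - f`, over those points of `I` that
the translation by `u` keeps in `I`. -/
noncomputable def sqIncrement (f : ℝ → ℝ) (I : Set ℝ) (u : ℝ) : ℝ≥0∞ :=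
  ∫⁻ s in I ∩ (· + u) ⁻¹' I, ENNReal.ofReal ((f (s + u) - f s) ^ 2)

theorem gagliardoEnergy_eq_lintegral_sqIncrement {f : ℝ → ℝ} {I : Set ℝ} (hf : Measurable f)
    (hI : MeasurableSet I) :
    gagliardoEnergy f I = ∫⁻ u, sqIncrement f I u * ENNReal.ofReal (1 / u ^ 2) := by
  classical
  set G : ℝ × ℝ → ℝ≥0∞ := (I ×ˢ I).indicator fun p =>
    ENNReal.ofReal ((f p.1 - f p.2) ^ 2 / (p.1 - p.2) ^ 2) with hG
  have measurable_G : Measurable G := by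
    refine Measurable.indicator ?_ (hI.prod hI)
    fun_prop
  have measurable_shear : Measurable (Function.uncurry fun s u => G (s, s + u)) :=
    measurable_G.comp (f := fun p : ℝ × ℝ => (p.1, p.1 + p.2)) (by fun_prop)
  have inner_eq (u : ℝ) :
      ∫⁻ s, G (s, s + u) = sqIncrement f I u * ENNReal.ofReal (1 / u ^ 2) := by
    rw [sqIncrement, ← lintegral_mul_const' _ _ ENNReal.ofReal_ne_top,
      ← lintegral_indicator (hI.inter (hI.preimage (by fun_prop)))]
    refine lintegral_congr fun s => ?_
    simp only [hG, indicator_apply, mem_prod, mem_inter_iff, mem_preimage,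
      ← ENNReal.ofReal_mul (sq_nonneg _)]
    congr 2
    ring
  calc gagliardoEnergy f I = ∫⁻ s, ∫⁻ t, G (s, t) := by
        rw [gagliardoEnergy, ← lintegral_indicator hI]
        refine lintegral_congr fun s => ?_
        by_cases hs : s ∈ I
        · simp only [indicator_of_mem hs, ← lintegral_indicator hI, hG, indicator_apply, mem_prod,
            hs, true_and]
        · simp [hG, hs]
    _ = ∫⁻ s, ∫⁻ u, G (s, s + u) :=
        lintegral_congr fun s => (lintegral_add_left_eq_self (fun t => G (s, t)) s).symm
    _ = ∫⁻ u, ∫⁻ s, G (s, s + u) :=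
        lintegral_lintegral_swap measurable_shear.aemeasurable
    _ = ∫⁻ u, sqIncrement f I u * ENNReal.ofReal (1 / u ^ 2) := lintegral_congr inner_eq

theorem sqIncrement_le_mul_lintegral_edist {f : ℝ → ℝ} {B u : ℝ} (I : Set ℝ)
    (hB : ∀ s, |f (s + u) - f s| ≤ B) :
    sqIncrement f I u ≤ ENNReal.ofReal B * ∫⁻ s, edist (f (s + u)) (f s) := by
  have hB_nonneg : 0 ≤ B := (abs_nonneg _).trans (hB 0)
  rw [← lintegral_const_mul' _ _ ENNReal.ofReal_ne_top]
  refine (setLIntegral_le_lintegral _ _).trans (lintegral_mono fun s => ?_)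
  rw [edist_dist, Real.dist_eq, ← ENNReal.ofReal_mul hB_nonneg, ← sq_abs, sq]
  gcongr
  exact hB s

theorem sqIncrement_le_four_mul_lintegral_sq {f : ℝ → ℝ} (hf : Measurable f) {I : Set ℝ}
    (hI : MeasurableSet I) (u : ℝ) :
    sqIncrement f I u ≤ 4 * ∫⁻ s in I, ENNReal.ofReal (f s ^ 2) := by
  have translate : ∫⁻ s in (· + u) ⁻¹' I, ENNReal.ofReal (f (s + u) ^ 2)
      = ∫⁻ s in I, ENNReal.ofReal (f s ^ 2) :=
    (measurePreserving_add_right volume u).setLIntegral_comp_preimage hI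
      (f := fun s => ENNReal.ofReal (f s ^ 2)) (by fun_prop)
  calc sqIncrement f I u
      ≤ ∫⁻ s in I ∩ (· + u) ⁻¹' I,
          (2 * ENNReal.ofReal (f (s + u) ^ 2) + 2 * ENNReal.ofReal (f s ^ 2)) := by
        refine lintegral_mono fun s => ?_
        rw [← mul_add, ← ENNReal.ofReal_add (sq_nonneg _) (sq_nonneg _),
          ← ENNReal.ofReal_ofNat 2, ← ENNReal.ofReal_mul zero_le_two]
        exact ENNReal.ofReal_le_ofReal (by nlinarith [sq_nonneg (f (s + u) + f s)])
    _ = 2 * (∫⁻ s in I ∩ (· + u) ⁻¹' I, ENNReal.ofReal (f (s + u) ^ 2))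
          + 2 * ∫⁻ s in I ∩ (· + u) ⁻¹' I, ENNReal.ofReal (f s ^ 2) := by
        rw [lintegral_add_left (by fun_prop), lintegral_const_mul _ (by fun_prop),
          lintegral_const_mul _ (by fun_prop)]
    _ ≤ 2 * (∫⁻ s in (· + u) ⁻¹' I, ENNReal.ofReal (f (s + u) ^ 2))
          + 2 * ∫⁻ s in I, ENNReal.ofReal (f s ^ 2) := by
        gcongr
        exacts [inter_subset_right, inter_subset_left]
    _ = 4 * ∫⁻ s in I, ENNReal.ofReal (f s ^ 2) := by
        rw [translate, ← add_mul]
        norm_num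

theorem sqIncrement_le_of_eVariationOn_le {f : ℝ → ℝ} (hf : Measurable f) {B V u : ℝ} (I : Set ℝ)
    (hB : ∀ s, |f (s + u) - f s| ≤ B) (hV : eVariationOn f univ ≤ ENNReal.ofReal V) :
    sqIncrement f I u ≤ ENNReal.ofReal (B * |u| * V) := by
  have B_nonneg : 0 ≤ B := (abs_nonneg _).trans (hB 0)
  calc sqIncrement f I u ≤ ENNReal.ofReal B * ∫⁻ s, edist (f (s + u)) (f s) :=
        sqIncrement_le_mul_lintegral_edist I hB
    _ ≤ ENNReal.ofReal B * (ENNReal.ofReal |u| * ENNReal.ofReal V) := by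
        gcongr
        exact (lintegral_edist_add_right_le hf u).trans (by gcongr)
    _ = ENNReal.ofReal (B * |u| * V) := by
        rw [← mul_assoc, ← ENNReal.ofReal_mul B_nonneg, ← ENNReal.ofReal_mul (by positivity)]

theorem mul_ofReal_one_div_sq_le {x : ℝ≥0∞} {X Y u : ℝ} (hX : x ≤ ENNReal.ofReal X)
    (hXY : X / |u| ^ 2 ≤ Y) : x * ENNReal.ofReal (1 / u ^ 2) ≤ ENNReal.ofReal Y :=
  calc x * ENNReal.ofReal (1 / u ^ 2) ≤ ENNReal.ofReal X * ENNReal.ofReal (1 / u ^ 2) := by gcongr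
    _ = ENNReal.ofReal (X / |u| ^ 2) := by
        rw [← ENNReal.ofReal_mul' (by positivity), mul_one_div, sq_abs]
    _ ≤ ENNReal.ofReal Y := ENNReal.ofReal_le_ofReal hXY

theorem sqIncrement_mul_one_div_sq_le {f : ℝ → ℝ} {K : ℝ≥0} (hf : LipschitzWith K f)
    {A V P Q : ℝ} {I : Set ℝ} (hI : MeasurableSet I) (hP : 0 < P) (hKP : K * P ≤ A)
    (hosc : ∀ s t, |f s - f t| ≤ A) (hV₀ : 0 ≤ V) (hV : eVariationOn f univ ≤ ENNReal.ofReal V)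
    (hL2 : ∫⁻ s in I, ENNReal.ofReal (f s ^ 2) ≤ ENNReal.ofReal (A * V * Q)) (u : ℝ) :
    sqIncrement f I u * ENNReal.ofReal (1 / u ^ 2) ≤
      ENNReal.ofReal (4 * (A * V)) * ENNReal.ofReal (min (min P⁻¹ |u|⁻¹) (Q / |u| ^ 2)) := by
  have AV_nonneg : 0 ≤ A * V := mul_nonneg ((abs_nonneg _).trans (hosc 0 0)) hV₀
  rcases eq_or_ne u 0 with rfl | hu
  · simp
  have abs_sub_le (s : ℝ) : |f (s + u) - f s| ≤ A / P * |u| :=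
    calc |f (s + u) - f s| ≤ K * |u| := by simpa [Real.dist_eq] using hf.dist_le_mul (s + u) s
      _ ≤ A / P * |u| := by gcongr; exact (le_div_iff₀ hP).mpr hKP
  have near := sqIncrement_le_of_eVariationOn_le hf.continuous.measurable I abs_sub_le hV
  have middle :=
    sqIncrement_le_of_eVariationOn_le hf.continuous.measurable I (fun s => hosc (s + u) s) hV
  have far : sqIncrement f I u ≤ ENNReal.ofReal (4 * (A * V * Q)) := by
    rw [ENNReal.ofReal_mul (by norm_num), ENNReal.ofReal_ofNat]
    exact (sqIncrement_le_four_mul_lintegral_sq hf.continuous.measurable hI u).trans (by gcongr)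
  rw [← ENNReal.ofReal_mul (by positivity), mul_min_of_nonneg _ _ (by positivity),
    mul_min_of_nonneg _ _ (by positivity), ENNReal.ofReal_min, ENNReal.ofReal_min]
  refine le_min (le_min (mul_ofReal_one_div_sq_le near ?_) (mul_ofReal_one_div_sq_le middle ?_))
    (mul_ofReal_one_div_sq_le far (le_of_eq (by ring)))
  · calc A / P * |u| * |u| * V / |u| ^ 2 = A * V * P⁻¹ := by field_simp
      _ ≤ 4 * (A * V) * P⁻¹ := by gcongr ?_ * _; linarith
  · calc A * |u| * V / |u| ^ 2 = A * V * |u|⁻¹ := by field_simp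
      _ ≤ 4 * (A * V) * |u|⁻¹ := by gcongr ?_ * _; linarith

theorem gagliardoEnergy_le_of_lipschitzWith {f : ℝ → ℝ} {K : ℝ≥0} (hf : LipschitzWith K f)
    {A V P Q : ℝ} {I : Set ℝ} (hI : MeasurableSet I) (hP : 0 < P) (hPQ : P ≤ Q) (hKP : K * P ≤ A)
    (hosc : ∀ s t, |f s - f t| ≤ A) (hV₀ : 0 ≤ V) (hV : eVariationOn f univ ≤ ENNReal.ofReal V)
    (hL2 : ∫⁻ s in I, ENNReal.ofReal (f s ^ 2) ≤ ENNReal.ofReal (A * V * Q)) :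
    gagliardoEnergy f I ≤ ENNReal.ofReal (8 * (A * V) * (2 + Real.log (Q / P))) := by
  have AV_nonneg : 0 ≤ A * V := mul_nonneg ((abs_nonneg _).trans (hosc 0 0)) hV₀
  calc gagliardoEnergy f I
      = ∫⁻ u, sqIncrement f I u * ENNReal.ofReal (1 / u ^ 2) :=
        gagliardoEnergy_eq_lintegral_sqIncrement hf.continuous.measurable hI
    _ ≤ ∫⁻ u, ENNReal.ofReal (4 * (A * V)) *
          ENNReal.ofReal (min (min P⁻¹ |u|⁻¹) (Q / |u| ^ 2)) :=
        lintegral_mono (sqIncrement_mul_one_div_sq_le hf hI hP hKP hosc hV₀ hV hL2)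
    _ ≤ ENNReal.ofReal (4 * (A * V)) * ENNReal.ofReal (2 * (2 + Real.log (Q / P))) := by
        rw [lintegral_const_mul' _ _ ENNReal.ofReal_ne_top]
        gcongr
        exact lintegral_min_inv_div_sq_le hP hPQ
    _ = ENNReal.ofReal (8 * (A * V) * (2 + Real.log (Q / P))) := by
        rw [← ENNReal.ofReal_mul (by positivity)]
        congr 1
        ring

theorem gagliardoEnergy_congr {f g : ℝ → ℝ} {I : Set ℝ} (hI : MeasurableSet I) (hfg : EqOn f g I) :
    gagliardoEnergy f I = gagliardoEnergy g I :=
  setLIntegral_congr_fun hI fun s hs => setLIntegral_congr_fun hI fun t ht => by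
    rw [hfg hs, hfg ht]

theorem gagliardoEnergy_Icc_le_of_lipschitzOnWith {f : ℝ → ℝ} {K : ℝ≥0} {a b : ℝ} (hab : a ≤ b)
    (hf : LipschitzOnWith K f (Icc a b)) {A V P Q : ℝ} (hP : 0 < P) (hPQ : P ≤ Q)
    (hKP : K * P ≤ A) (hosc : ∀ s ∈ Icc a b, ∀ t ∈ Icc a b, |f s - f t| ≤ A) (hV₀ : 0 ≤ V)
    (hV : eVariationOn f (Icc a b) ≤ ENNReal.ofReal V)
    (hL2 : ∫⁻ s in Icc a b, ENNReal.ofReal (f s ^ 2) ≤ ENNReal.ofReal (A * V * Q)) :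
    gagliardoEnergy f (Icc a b) ≤ ENNReal.ofReal (8 * (A * V) * (2 + Real.log (Q / P))) := by
  set clamp : ℝ → ℝ := Subtype.val ∘ projIcc a b hab
  have clamp_mem (s : ℝ) : clamp s ∈ Icc a b := (projIcc a b hab s).2
  have clamp_eq {s : ℝ} (hs : s ∈ Icc a b) : clamp s = s :=
    congrArg Subtype.val (projIcc_of_mem hab hs)
  have clamp_mono : Monotone clamp := fun _ _ hst => monotone_projIcc hab hst
  have clamp_lipschitz : LipschitzWith 1 clamp := by
    simpa only [mul_one] using (LipschitzWith.subtype_val _).comp (LipschitzWith.projIcc hab)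
  have comp_lipschitz : LipschitzWith K (f ∘ clamp) := by
    rw [← lipschitzOnWith_univ]
    simpa only [mul_one] using hf.comp clamp_lipschitz.lipschitzOnWith fun s _ => clamp_mem s
  have comp_eqOn : EqOn (f ∘ clamp) f (Icc a b) := fun s hs => congrArg f (clamp_eq hs)
  rw [← gagliardoEnergy_congr measurableSet_Icc comp_eqOn]
  refine gagliardoEnergy_le_of_lipschitzWith comp_lipschitz measurableSet_Icc hP hPQ hKP
    (fun s t => hosc _ (clamp_mem s) _ (clamp_mem t)) hV₀ ?_ ?_
  · exact (eVariationOn.comp_le_of_monotoneOn f clamp (clamp_mono.monotoneOn _)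
      fun s _ => clamp_mem s).trans hV
  · rwa [setLIntegral_congr_fun measurableSet_Icc fun s hs => by rw [comp_eqOn hs]]

theorem gagliardoEnergy_mono (f : ℝ → ℝ) {I J : Set ℝ} (hIJ : I ⊆ J) :
    gagliardoEnergy f I ≤ gagliardoEnergy f J :=
  (lintegral_mono_set hIJ).trans (lintegral_mono fun _ => lintegral_mono_set hIJ)

theorem integral_integral_le_of_gagliardoEnergy_le {f : ℝ → ℝ} {I : Set ℝ} {c : ℝ} (hc : 0 ≤ c)
    (hf : gagliardoEnergy f I ≤ ENNReal.ofReal c) :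
    ∫ s in I, ∫ t in I, (f s - f t) ^ 2 / (s - t) ^ 2 ≤ c := by
  refine (ENNReal.ofReal_le_ofReal_iff hc).mp ?_
  calc ENNReal.ofReal (∫ s in I, ∫ t in I, (f s - f t) ^ 2 / (s - t) ^ 2)
      ≤ ‖∫ s in I, ∫ t in I, (f s - f t) ^ 2 / (s - t) ^ 2‖ₑ := Real.ofReal_le_enorm _
    _ ≤ ∫⁻ s in I, ‖∫ t in I, (f s - f t) ^ 2 / (s - t) ^ 2‖ₑ :=
        enorm_integral_le_lintegral_enorm _
    _ ≤ ∫⁻ s in I, ∫⁻ t in I, ‖(f s - f t) ^ 2 / (s - t) ^ 2‖ₑ :=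
        lintegral_mono fun s => enorm_integral_le_lintegral_enorm _
    _ = gagliardoEnergy f I := by
        refine lintegral_congr fun s => lintegral_congr fun t => Real.enorm_eq_ofReal ?_
        positivity
    _ ≤ ENNReal.ofReal c := hf

end GagliardoEnergy

section Mesh

theorem eVariationOn_Icc_eq_sum {α E : Type*} [LinearOrder α] [PseudoEMetricSpace E] (f : α → E)
    {ξ : ℕ → α} {r : ℕ} (hξ : MonotoneOn ξ (Iic r)) :
    eVariationOn f (Icc (ξ 0) (ξ r)) =
      ∑ i ∈ Finset.range r, eVariationOn f (Icc (ξ i) (ξ (i + 1))) := by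
  induction r with
  | zero => simp
  | succ n ih =>
    have first_le : ξ 0 ≤ ξ n := hξ (mem_Iic.mpr (n + 1).zero_le) n.le_succ n.zero_le
    have last_le : ξ n ≤ ξ (n + 1) := hξ n.le_succ self_mem_Iic n.le_succ
    rw [Finset.sum_range_succ, ← ih (hξ.mono (Iic_subset_Iic.mpr n.le_succ))]
    simpa only [univ_inter] using (eVariationOn.Icc_add_Icc f first_le last_le (mem_univ _)).symm

theorem setLIntegral_Icc_le_sum {α : Type*} [LinearOrder α] [MeasurableSpace α] (μ : Measure α)
    (f : α → ℝ≥0∞) (ξ : ℕ → α) {r : ℕ} (hr : 0 < r) :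
    ∫⁻ t in Icc (ξ 0) (ξ r), f t ∂μ ≤
      ∑ i ∈ Finset.range r, ∫⁻ t in Icc (ξ i) (ξ (i + 1)), f t ∂μ := by
  induction r, hr using Nat.le_induction with
  | base => simp
  | succ n _ ih =>
    calc ∫⁻ t in Icc (ξ 0) (ξ (n + 1)), f t ∂μ
        ≤ ∫⁻ t in Icc (ξ 0) (ξ n) ∪ Icc (ξ n) (ξ (n + 1)), f t ∂μ :=
          lintegral_mono_set Icc_subset_Icc_union_Icc
      _ ≤ (∫⁻ t in Icc (ξ 0) (ξ n), f t ∂μ) + ∫⁻ t in Icc (ξ n) (ξ (n + 1)), f t ∂μ :=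
          lintegral_union_le _ _ _
      _ ≤ ∑ i ∈ Finset.range (n + 1), ∫⁻ t in Icc (ξ i) (ξ (i + 1)), f t ∂μ := by
          rw [Finset.sum_range_succ]
          gcongr

theorem lipschitzOnWith_Icc_of_forall_succ {E : Type*} [PseudoEMetricSpace E] {f : ℝ → E}
    {K : ℝ≥0} {ξ : ℕ → ℝ} {r : ℕ}
    (hf : ∀ i < r, LipschitzOnWith K f (Icc (ξ i) (ξ (i + 1)))) :
    LipschitzOnWith K f (Icc (ξ 0) (ξ r)) := by
  induction r with
  | zero => simp [LipschitzOnWith]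
  | succ n ih =>
    exact lipschitzOnWith_Icc_trans (ih fun i hi => hf i (hi.trans n.lt_succ_self))
      (hf n n.lt_succ_self)

theorem sum_range_add_succ_le_two_mul_sum {g : ℕ → ℝ} (hg : ∀ i, 0 ≤ g i) (r : ℕ) :
    ∑ i ∈ Finset.range r, (g i + g (i + 1)) ≤ 2 * ∑ i ∈ Finset.range (r + 1), g i := by
  rw [Finset.sum_add_distrib, two_mul]
  gcongr
  · exact fun i _ _ => hg i
  · exact r.le_succ
  · rw [Finset.sum_range_succ' g]
    exact le_add_of_nonneg_right (hg 0)

theorem sum_abs_le_card_mul {ι : Type*} {s Z : Finset ι} {g : ι → ℝ} {M : ℝ} (hM : 0 ≤ M)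
    (hg : ∀ i ∈ s, |g i| ≤ M) (hZ : ∀ i ∈ s, i ∉ Z → g i = 0) :
    ∑ i ∈ s, |g i| ≤ Z.card * M := by
  classical
  calc ∑ i ∈ s, |g i| = ∑ i ∈ s with i ∈ Z, |g i| := by
        refine (Finset.sum_filter_of_ne fun i hi hne => ?_).symm
        exact not_imp_comm.mp (hZ i hi) (abs_ne_zero.mp hne)
    _ ≤ (s.filter (· ∈ Z)).card * M := by
        rw [← nsmul_eq_mul]
        exact Finset.sum_le_card_nsmul _ _ _ fun i hi => hg i (Finset.mem_filter.mp hi).1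
    _ ≤ Z.card * M := by
        gcongr
        exact fun i hi => (Finset.mem_filter.mp hi).2

end Mesh

section AffineElement

variable {f : ℝ → ℝ} {α γ x y : ℝ}

theorem abs_slope_mul_of_eqOn_affine (hf : EqOn f (fun t => α * t + γ) (Icc x y)) (hxy : x ≤ y) :
    |α| * (y - x) = |f y - f x| := by
  rw [hf (left_mem_Icc.mpr hxy), hf (right_mem_Icc.mpr hxy), ← abs_of_nonneg (sub_nonneg.mpr hxy),
    ← abs_mul]
  congr 1
  ring

theorem lipschitzOnWith_of_eqOn_affine {s : Set ℝ} (hf : EqOn f (fun t => α * t + γ) s) :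
    LipschitzOnWith ‖α‖₊ f s := by
  refine LipschitzOnWith.of_dist_le_mul fun t ht u hu => le_of_eq ?_
  rw [hf ht, hf hu, dist_add_right, Real.dist_eq, ← mul_sub, abs_mul, Real.dist_eq, coe_nnnorm,
    Real.norm_eq_abs]

theorem eVariationOn_Icc_le_of_eqOn_affine (hf : EqOn f (fun t => α * t + γ) (Icc x y))
    (hxy : x ≤ y) : eVariationOn f (Icc x y) ≤ ENNReal.ofReal (|f x| + |f y|) := by
  refine (eVariationOn_Icc_le_of_lipschitzOnWith (lipschitzOnWith_of_eqOn_affine hf)).trans ?_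
  rw [coe_nnnorm, Real.norm_eq_abs, abs_slope_mul_of_eqOn_affine hf hxy, add_comm]
  exact ENNReal.ofReal_le_ofReal (abs_sub _ _)

theorem sq_le_add_sq_of_eqOn_affine (hf : EqOn f (fun t => α * t + γ) (Icc x y)) {t : ℝ}
    (ht : t ∈ Icc x y) : f t ^ 2 ≤ f x ^ 2 + f y ^ 2 := by
  have hxy : x ≤ y := ht.1.trans ht.2
  have abs_le_max : |f t| ≤ max |f x| |f y| := by
    rw [hf ht, hf (left_mem_Icc.mpr hxy), hf (right_mem_Icc.mpr hxy)]
    rcases le_total 0 α with hα | hα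
    · exact abs_le_max_abs_abs (by nlinarith [ht.1]) (by nlinarith [ht.2])
    · rw [max_comm]
      exact abs_le_max_abs_abs (by nlinarith [ht.2]) (by nlinarith [ht.1])
  rcases le_max_iff.mp abs_le_max with h | h
  · exact (sq_le_sq.mpr h).trans (le_add_of_nonneg_right (sq_nonneg _))
  · exact (sq_le_sq.mpr h).trans (le_add_of_nonneg_left (sq_nonneg _))

theorem setLIntegral_Icc_sq_le_of_eqOn_affine (hf : EqOn f (fun t => α * t + γ) (Icc x y)) :
    ∫⁻ t in Icc x y, ENNReal.ofReal (f t ^ 2) ≤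
      ENNReal.ofReal ((f x ^ 2 + f y ^ 2) * (y - x)) :=
  calc ∫⁻ t in Icc x y, ENNReal.ofReal (f t ^ 2)
      ≤ ∫⁻ _ in Icc x y, ENNReal.ofReal (f x ^ 2 + f y ^ 2) :=
        setLIntegral_mono' measurableSet_Icc fun t ht =>
          ENNReal.ofReal_le_ofReal (sq_le_add_sq_of_eqOn_affine hf ht)
    _ = ENNReal.ofReal ((f x ^ 2 + f y ^ 2) * (y - x)) := by
        rw [setLIntegral_const, Real.volume_Icc, ← ENNReal.ofReal_mul (by positivity)]

end AffineElement

/-- The space `𝕊_1(𝒯)` of the mesh `𝒯` with nodes `ξ 0 < ξ 1 < ⋯ < ξ r`: the function `v` is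
continuous on `[ξ 0, ξ r]` and affine on every open element. The values `ξ i` with `r < i` are
irrelevant. -/
structure IsPiecewiseAffine (ξ : ℕ → ℝ) (r : ℕ) (v : ℝ → ℝ) : Prop where
  lt_succ : ∀ i < r, ξ i < ξ (i + 1)
  continuousOn : ContinuousOn v (Icc (ξ 0) (ξ r))
  affine : ∀ i < r, ∃ α γ : ℝ, ∀ t ∈ Ioo (ξ i) (ξ (i + 1)), v t = α * t + γ

namespace IsPiecewiseAffine

variable {ξ : ℕ → ℝ} {r : ℕ} {v : ℝ → ℝ}

theorem monotoneOn (hv : IsPiecewiseAffine ξ r v) : MonotoneOn ξ (Iic r) :=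
  monotoneOn_of_le_succ ordConnected_Iic fun i _ _ hi =>
    (hv.lt_succ i (Nat.lt_of_succ_le hi)).le

theorem node_mem (hv : IsPiecewiseAffine ξ r v) {i : ℕ} (hi : i ≤ r) : ξ i ∈ Icc (ξ 0) (ξ r) :=
  ⟨hv.monotoneOn (mem_Iic.mpr r.zero_le) hi i.zero_le, hv.monotoneOn hi self_mem_Iic hi⟩

theorem exists_eqOn_Icc (hv : IsPiecewiseAffine ξ r v) {i : ℕ} (hi : i < r) :
    ∃ α γ : ℝ, EqOn v (fun t => α * t + γ) (Icc (ξ i) (ξ (i + 1))) := by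
  obtain ⟨α, γ, eqOn_Ioo⟩ := hv.affine i hi
  have continuousOn_element : ContinuousOn v (Icc (ξ i) (ξ (i + 1))) :=
    hv.continuousOn.mono (Icc_subset_Icc (hv.node_mem hi.le).1 (hv.node_mem hi).2)
  exact ⟨α, γ, EqOn.of_subset_closure eqOn_Ioo continuousOn_element (by fun_prop)
    Ioo_subset_Icc_self (closure_Ioo (hv.lt_succ i hi).ne).ge⟩

theorem lipschitzOnWith (hv : IsPiecewiseAffine ξ r v) {K : ℝ≥0}
    (hK : ∀ i < r, |v (ξ (i + 1)) - v (ξ i)| ≤ K * (ξ (i + 1) - ξ i)) :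
    LipschitzOnWith K v (Icc (ξ 0) (ξ r)) := by
  refine lipschitzOnWith_Icc_of_forall_succ fun i hi => ?_
  obtain ⟨α, γ, eqOn_element⟩ := hv.exists_eqOn_Icc hi
  have slope_le : |α| ≤ K := by
    refine le_of_mul_le_mul_right ?_ (sub_pos.mpr (hv.lt_succ i hi))
    rw [abs_slope_mul_of_eqOn_affine eqOn_element (hv.lt_succ i hi).le]
    exact hK i hi
  exact (lipschitzOnWith_of_eqOn_affine eqOn_element).weaken slope_le

theorem eVariationOn_le (hv : IsPiecewiseAffine ξ r v) :
    eVariationOn v (Icc (ξ 0) (ξ r)) ≤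
      ENNReal.ofReal (2 * ∑ i ∈ Finset.range (r + 1), |v (ξ i)|) := by
  have element_le (i : ℕ) (hi : i ∈ Finset.range r) : eVariationOn v (Icc (ξ i) (ξ (i + 1))) ≤
      ENNReal.ofReal (|v (ξ i)| + |v (ξ (i + 1))|) := by
    obtain ⟨α, γ, eqOn_element⟩ := hv.exists_eqOn_Icc (Finset.mem_range.mp hi)
    exact eVariationOn_Icc_le_of_eqOn_affine eqOn_element
      (hv.lt_succ i (Finset.mem_range.mp hi)).le
  rw [eVariationOn_Icc_eq_sum v hv.monotoneOn]
  refine (Finset.sum_le_sum element_le).trans ?_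
  rw [← ENNReal.ofReal_sum_of_nonneg fun i _ => by positivity]
  exact ENNReal.ofReal_le_ofReal
    (sum_range_add_succ_le_two_mul_sum (fun i => abs_nonneg (v (ξ i))) r)

theorem setLIntegral_sq_le (hv : IsPiecewiseAffine ξ r v) (hr : 0 < r) {Q : ℝ}
    (hQ : ∀ i < r, ξ (i + 1) - ξ i ≤ Q) :
    ∫⁻ t in Icc (ξ 0) (ξ r), ENNReal.ofReal (v t ^ 2) ≤
      ENNReal.ofReal (2 * (∑ i ∈ Finset.range (r + 1), v (ξ i) ^ 2) * Q) := by
  have Q_nonneg : 0 ≤ Q := (sub_nonneg.mpr (hv.lt_succ 0 hr).le).trans (hQ 0 hr)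
  have element_le (i : ℕ) (hi : i ∈ Finset.range r) :
      ∫⁻ t in Icc (ξ i) (ξ (i + 1)), ENNReal.ofReal (v t ^ 2) ≤
        ENNReal.ofReal ((v (ξ i) ^ 2 + v (ξ (i + 1)) ^ 2) * Q) := by
    obtain ⟨α, γ, eqOn_element⟩ := hv.exists_eqOn_Icc (Finset.mem_range.mp hi)
    refine (setLIntegral_Icc_sq_le_of_eqOn_affine eqOn_element).trans ?_
    gcongr
    exact hQ i (Finset.mem_range.mp hi)
  refine (setLIntegral_Icc_le_sum _ _ _ hr).trans ((Finset.sum_le_sum element_le).trans ?_)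
  rw [← ENNReal.ofReal_sum_of_nonneg fun i _ => by positivity, ← Finset.sum_mul]
  gcongr
  exact sum_range_add_succ_le_two_mul_sum (fun i => sq_nonneg (v (ξ i))) r

theorem gagliardoEnergy_le (hv : IsPiecewiseAffine ξ r v) (hr : 0 < r) {M P Q : ℝ}
    (hM : ∀ t ∈ Icc (ξ 0) (ξ r), |v t| ≤ M) (hP : 0 < P)
    (hPh : ∀ i < r, P ≤ ξ (i + 1) - ξ i) (hhQ : ∀ i < r, ξ (i + 1) - ξ i ≤ Q) :
    gagliardoEnergy v (Icc (ξ 0) (ξ r)) ≤ ENNReal.ofReal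
      (32 * (M * ∑ i ∈ Finset.range (r + 1), |v (ξ i)|) * (2 + Real.log (Q / P))) := by
  set S : ℝ := ∑ i ∈ Finset.range (r + 1), |v (ξ i)|
  have S_nonneg : 0 ≤ S := Finset.sum_nonneg fun i _ => abs_nonneg _
  have M_nonneg : 0 ≤ M := (abs_nonneg _).trans (hM _ (hv.node_mem r.zero_le))
  have hPQ : P ≤ Q := (hPh 0 hr).trans (hhQ 0 hr)
  have Q_nonneg : 0 ≤ Q := hP.le.trans hPQ
  have oscillation (s : ℝ) (hs : s ∈ Icc (ξ 0) (ξ r)) (t : ℝ) (ht : t ∈ Icc (ξ 0) (ξ r)) :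
      |v s - v t| ≤ 2 * M := by
    linarith [abs_sub (v s) (v t), hM s hs, hM t ht]
  have lipschitz : LipschitzOnWith (2 * M / P).toNNReal v (Icc (ξ 0) (ξ r)) := by
    refine hv.lipschitzOnWith fun i hi => ?_
    rw [Real.coe_toNNReal _ (by positivity)]
    calc |v (ξ (i + 1)) - v (ξ i)| ≤ 2 * M := oscillation _ (hv.node_mem hi) _ (hv.node_mem hi.le)
      _ = 2 * M / P * P := (div_mul_cancel₀ _ hP.ne').symm
      _ ≤ 2 * M / P * (ξ (i + 1) - ξ i) := by gcongr; exact hPh i hi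
  have sum_sq_le : ∑ i ∈ Finset.range (r + 1), v (ξ i) ^ 2 ≤ M * S := by
    rw [Finset.mul_sum]
    refine Finset.sum_le_sum fun i hi => ?_
    rw [← sq_abs, sq]
    gcongr
    exact hM _ (hv.node_mem (Nat.lt_succ_iff.mp (Finset.mem_range.mp hi)))
  refine (gagliardoEnergy_Icc_le_of_lipschitzOnWith (A := 2 * M) (V := 2 * S)
    (hv.node_mem le_rfl).1 lipschitz hP hPQ ?_ oscillation (by positivity) hv.eVariationOn_le
    ((hv.setLIntegral_sq_le hr hhQ).trans ?_)).trans_eq ?_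
  · rw [Real.coe_toNNReal _ (by positivity), div_mul_cancel₀ _ hP.ne']
  · gcongr ENNReal.ofReal (?_ * _)
    linarith [mul_nonneg M_nonneg S_nonneg]
  · congr 2
    ring

theorem integral_integral_le_log (hv : IsPiecewiseAffine ξ r v) (hr : 0 < r) {M P Q : ℝ}
    (hM : ∀ t ∈ Icc (ξ 0) (ξ r), |v t| ≤ M) (hP : 0 < P)
    (hPh : ∀ i < r, P ≤ ξ (i + 1) - ξ i) (hhQ : ∀ i < r, ξ (i + 1) - ξ i ≤ Q) {Z : Finset ℕ}
    (hvanish : ∀ i ≤ r, i ∉ Z → v (ξ i) = 0) :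
    ∫ s in Ioo (ξ 0) (ξ r), ∫ t in Ioo (ξ 0) (ξ r), (v s - v t) ^ 2 / (s - t) ^ 2 ≤
      160 * Z.card * Real.log (1 + Q / P) * M ^ 2 := by
  have M_nonneg : 0 ≤ M := (abs_nonneg _).trans (hM _ (hv.node_mem r.zero_le))
  have one_le_ratio : 1 ≤ Q / P := (one_le_div₀ hP).mpr ((hPh 0 hr).trans (hhQ 0 hr))
  have log_nonneg : 0 ≤ Real.log (Q / P) := Real.log_nonneg one_le_ratio
  have log_one_add_nonneg : 0 ≤ Real.log (1 + Q / P) := Real.log_nonneg (by linarith)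
  have nodal_sum_le : ∑ i ∈ Finset.range (r + 1), |v (ξ i)| ≤ Z.card * M :=
    sum_abs_le_card_mul M_nonneg
      (fun i hi => hM _ (hv.node_mem (Finset.mem_range_succ_iff.mp hi)))
      fun i hi => hvanish i (Finset.mem_range_succ_iff.mp hi)
  refine integral_integral_le_of_gagliardoEnergy_le (by positivity) ?_
  calc gagliardoEnergy v (Ioo (ξ 0) (ξ r)) ≤ gagliardoEnergy v (Icc (ξ 0) (ξ r)) :=
        gagliardoEnergy_mono v Ioo_subset_Icc_self
    _ ≤ ENNReal.ofReal
          (32 * (M * ∑ i ∈ Finset.range (r + 1), |v (ξ i)|) * (2 + Real.log (Q / P))) :=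
        hv.gagliardoEnergy_le hr hM hP hPh hhQ
    _ ≤ ENNReal.ofReal (32 * (M * (Z.card * M)) * (5 * Real.log (1 + Q / P))) := by
        gcongr
        exact two_add_log_le_five_mul_log_one_add one_le_ratio
    _ = ENNReal.ofReal (160 * Z.card * Real.log (1 + Q / P) * M ^ 2) := by
        congr 1
        ring

end IsPiecewiseAffine

theorem gagliardo_bound_block_endpoint_function_general {r : ℕ} (hr : 0 < r) {ξ : ℕ → ℝ}
    {v : ℝ → ℝ} (hv : IsPiecewiseAffine ξ r v) {Z : Finset ℕ} {N : ℕ} (hZ : Z.card ≤ N)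
    (hvanish : ∀ i ≤ r, i ∉ Z → v (ξ i) = 0) :
    (∫ s in Ioo (ξ 0) (ξ r), ∫ t in Ioo (ξ 0) (ξ r), (v s - v t) ^ 2 / (s - t) ^ 2) ≤
      160 * N * Real.log (1 +
          ((Finset.range r).sup' (Finset.nonempty_range_iff.mpr hr.ne')
              fun i => ξ (i + 1) - ξ i) /
          ((Finset.range r).inf' (Finset.nonempty_range_iff.mpr hr.ne')
              fun i => ξ (i + 1) - ξ i)) *
        (sSup ((fun t => |v t|) '' Icc (ξ 0) (ξ r))) ^ 2 := by
  set Q := (Finset.range r).sup' (Finset.nonempty_range_iff.mpr hr.ne') fun i => ξ (i + 1) - ξ i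
  set P := (Finset.range r).inf' (Finset.nonempty_range_iff.mpr hr.ne') fun i => ξ (i + 1) - ξ i
  have hPh (i : ℕ) (hi : i < r) : P ≤ ξ (i + 1) - ξ i :=
    Finset.inf'_le _ (Finset.mem_range.mpr hi)
  have hhQ (i : ℕ) (hi : i < r) : ξ (i + 1) - ξ i ≤ Q :=
    Finset.le_sup' (fun i => ξ (i + 1) - ξ i) (Finset.mem_range.mpr hi)
  have P_pos : 0 < P := (Finset.lt_inf'_iff _).mpr fun i hi =>
    sub_pos.mpr (hv.lt_succ i (Finset.mem_range.mp hi))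
  have abs_le_sSup (t : ℝ) (ht : t ∈ Icc (ξ 0) (ξ r)) :
      |v t| ≤ sSup ((fun t => |v t|) '' Icc (ξ 0) (ξ r)) :=
    le_csSup (isCompact_Icc.bddAbove_image hv.continuousOn.abs) (mem_image_of_mem _ ht)
  have Q_nonneg : 0 ≤ Q := P_pos.le.trans ((hPh 0 hr).trans (hhQ 0 hr))
  have log_nonneg : 0 ≤ Real.log (1 + Q / P) :=
    Real.log_nonneg (le_add_of_nonneg_right (by positivity))
  refine (hv.integral_integral_le_log hr abs_le_sSup P_pos hPh hhQ hvanish).trans ?_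
  gcongr

/-- For every `mBar ∈ ℕ` and `cBar ≥ 1` there is `C > 0` (depending only on
`mBar` and `cBar`) such that: for every compact interval `[a,b]`, every mesh of `[a,b]` that
is piecewise quasi-uniform with parameters `(mBar, cBar)` (with blocks delimited by the
indices `β 0 < β 1 < ⋯ < β m`, `m ≤ mBar`), and every continuous piecewise linear `v` that
vanishes at every node except possibly at endpoints of the blocks, one has
`|v|²_{1/2,(a,b)} ≤ C · log(1 + R) · (sup_{[a,b]} |v|)²`, where `R` is the ratio between the
largest and the smallest element length of the mesh. -/
theorem gagliardo_bound_block_endpoint_function (mBar : ℕ) (cBar : ℝ) (hc : 1 ≤ cBar) :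
    ∃ C : ℝ, 0 < C ∧
      ∀ (a b : ℝ) (_hab : a < b) (r : ℕ) (hr : 0 < r) (ξ : ℕ → ℝ)
        (_h0 : ξ 0 = a) (_hr' : ξ r = b) (_hmono : ∀ i < r, ξ i < ξ (i + 1))
        -- the block structure of the piecewise quasi-uniform mesh
        (m : ℕ) (_hm : m ≤ mBar) (β : ℕ → ℕ)
        (_hβ0 : β 0 = 0) (_hβm : β m = r) (_hβmono : ∀ l < m, β l < β (l + 1))
        (_hqu : ∀ l < m, ∀ i, β l ≤ i → i < β (l + 1) → ∀ j, β l ≤ j → j < β (l + 1) →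
          ξ (i + 1) - ξ i ≤ cBar * (ξ (j + 1) - ξ j))
        (v : ℝ → ℝ) (_hcont : ContinuousOn v (Icc a b))
        -- `v ∈ 𝕊_1(𝒯)`: continuous and affine on each element
        (_hlin : ∀ i < r, ∃ α γ : ℝ, ∀ t ∈ Ioo (ξ i) (ξ (i + 1)), v t = α * t + γ)
        -- `v` vanishes at every node that is not an endpoint of a block
        (_hvanish : ∀ i ≤ r, (∀ l ≤ m, β l ≠ i) → v (ξ i) = 0),
        (∫ s in Ioo a b, ∫ t in Ioo a b, (v s - v t) ^ 2 / (s - t) ^ 2) ≤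
          C * Real.log (1 +
              ((Finset.range r).sup' (Finset.nonempty_range_iff.mpr hr.ne')
                  fun i => ξ (i + 1) - ξ i) /
              ((Finset.range r).inf' (Finset.nonempty_range_iff.mpr hr.ne')
                  fun i => ξ (i + 1) - ξ i)) *
            (sSup ((fun t => |v t|) '' Icc a b)) ^ 2 := by
  refine ⟨160 * (mBar + 1 : ℕ), by positivity, ?_⟩
  rintro _ _ - r hr ξ rfl rfl hmono m hm β - - - - v hcont hlin hvanish
  exact gagliardo_bound_block_endpoint_function_general hr ⟨hmono, hcont, hlin⟩
    (Z := (Finset.range (m + 1)).image β) (Finset.card_image_le.trans (by simpa using hm))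
    fun i hi hiZ => hvanish i hi (by simpa [Nat.lt_succ_iff] using hiZ)
end

section
/- (Bramble–Hilbert, L² form) For every k ∈ ℕ and every ρ ∈ (0,1] there exists a constant C > 0 (depending only on k and ρ) with the following property: let E ⊂ ℝ² be a bounded open set with diameter h_E that is star-shaped with respect to an open ball of radius at least ρ·h_E contained in E, let r, s be integers with 0 ≤ r ≤ s ≤ k + 1, and let v : ℝ² → ℝ be smooth on a neighborhood of the closure of E. Then there exists a polynomial p of total degree ≤ k in two variables such that ∫_E ‖D^r(v − p)(x)‖² dx ≤ C · h_E^{2(s−r)} · ∫_E ‖D^s v(x)‖² dx, where D^j denotes the j-th iterated (Fréchet) derivative and ‖·‖ its operator/Hilbert–Schmidt norm. Moreover, if s ≥ 2, the same polynomial p satisfies sup_{x ∈ E} |v(x) − p(x)| ≤ C · h_E^{s−1} · ( ∫_E ‖D^s v(x)‖² dx )^{1/2}. -/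
open MeasureTheory Set

/-!
The polynomial is the Taylor polynomial of `v` at a point `y` of the ball `B`. Its remainder at `x`
is controlled by the integral of `‖D^s v‖^p` along the segment from `y` to `x`. Integrating over
`(x, y) ∈ E × B` and substituting `z = (1 - t) y + t x` in the variable `x` when `t ≥ 1/2` and in
`y` when `t < 1/2` costs a Jacobian of at most `2 ^ d`, so the average of the remainder over
`y ∈ B`, and hence its value at some `y`, is bounded by a multiple of `∫_E ‖D^s v‖^p`.

For the pointwise bound the remainder `w` at `x` is in turn expanded around each `y ∈ B`. The
weight `(1 - t) ^ n` in the integral remainder absorbs the Jacobian `(1 - t) ^ (-d)` of the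
substitution in `y` as soon as `d ≤ n p`, so averaging over `B` bounds `|w x|` by the `L^p` norms
of the derivatives of `w` of order at most `n + 1`.
-/

open Metric Module AffineMap
open scoped NNReal ENNReal Nat

section IteratedFDeriv

variable {𝕜 V F : Type*} [NontriviallyNormedField 𝕜] [NormedAddCommGroup V] [NormedSpace 𝕜 V]
  [NormedAddCommGroup F] [NormedSpace 𝕜 F] {f : V → F} {x : V}

theorem norm_iteratedFDeriv_iteratedFDeriv (f : V → F) (x : V) (i j : ℕ) :
    ‖iteratedFDeriv 𝕜 i (iteratedFDeriv 𝕜 j f) x‖ = ‖iteratedFDeriv 𝕜 (i + j) f x‖ := by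
  induction j generalizing i with
  | zero =>
    rw [iteratedFDeriv_zero_eq_comp, LinearIsometryEquiv.norm_iteratedFDeriv_comp_left, add_zero]
  | succ j ih =>
    calc _ = ‖iteratedFDeriv 𝕜 i (fderiv 𝕜 (iteratedFDeriv 𝕜 j f)) x‖ :=
          (continuousMultilinearCurryLeftEquiv 𝕜 (fun _ : Fin (j + 1) ↦ V) F).symm
            |>.norm_iteratedFDeriv_comp_left _ _ _
      _ = _ := by rw [norm_iteratedFDeriv_fderiv, ih, Nat.add_right_comm, add_assoc]

theorem iteratedFDeriv_add_two_apply {n : ℕ} (hf : ContDiffAt 𝕜 (n + 2 : ℕ) f x)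
    (m : Fin (n + 2) → V) :
    iteratedFDeriv 𝕜 (n + 2) f x m =
      fderiv 𝕜 (fderiv 𝕜 (iteratedFDeriv 𝕜 n f)) x (m 0) (m 1) (Fin.tail (Fin.tail m)) := by
  have hsucc : DifferentiableAt 𝕜 (iteratedFDeriv 𝕜 (n + 1) f) x :=
    hf.differentiableAt_iteratedFDeriv (by norm_cast; omega)
  have hfderiv : DifferentiableAt 𝕜 (fderiv 𝕜 (iteratedFDeriv 𝕜 n f)) x :=
    (hf.iteratedFDeriv_right (m := 2) (i := n) (by norm_cast; omega)).fderiv_right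
      (m := 1) (by norm_num) |>.differentiableAt one_ne_zero
  have happly : HasFDerivAt (fun y ↦ fderiv 𝕜 (iteratedFDeriv 𝕜 n f) y (m 1)) _ x :=
    hfderiv.hasFDerivAt.clm_apply (hasFDerivAt_const (m 1) x)
  rw [hsucc.iteratedFDeriv_succ_apply_left']
  change fderiv 𝕜 (fun y ↦ fderiv 𝕜 (iteratedFDeriv 𝕜 n f) y (m 1) (Fin.tail (Fin.tail m))) x
    (m 0) = _
  rw [fderiv_continuousMultilinear_apply_const_apply happly.differentiableAt, happly.fderiv]
  simp

variable [IsRCLikeNormedField 𝕜]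

theorem iteratedFDeriv_comp_swap_zero_one {n : ℕ} (hf : ContDiffAt 𝕜 (n + 2 : ℕ) f x)
    (m : Fin (n + 2) → V) :
    iteratedFDeriv 𝕜 (n + 2) f x (m ∘ Equiv.swap 0 1) = iteratedFDeriv 𝕜 (n + 2) f x m := by
  have hsymm : IsSymmSndFDerivAt 𝕜 (iteratedFDeriv 𝕜 n f) x :=
    (hf.iteratedFDeriv_right (m := 2) (i := n) (by norm_cast; omega)).isSymmSndFDerivAt (by simp)
  have htail : Fin.tail (Fin.tail (m ∘ Equiv.swap 0 1)) = Fin.tail (Fin.tail m) := by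
    ext j
    exact congrArg m (Equiv.swap_apply_of_ne_of_ne (Fin.succ_ne_zero _)
      (Fin.succ_injective _ |>.ne (Fin.succ_ne_zero _)))
  rw [iteratedFDeriv_add_two_apply hf, iteratedFDeriv_add_two_apply hf, htail]
  simpa using congrArg (· (Fin.tail (Fin.tail m))) (hsymm (m 1) (m 0))

theorem iteratedFDeriv_comp_perm_of_contDiffAt {n : ℕ} (hf : ContDiffAt 𝕜 n f x)
    (σ : Equiv.Perm (Fin n)) (m : Fin n → V) :
    iteratedFDeriv 𝕜 n f x (m ∘ σ) = iteratedFDeriv 𝕜 n f x m := by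
  induction n generalizing x with
  | zero => rw [Subsingleton.elim (m ∘ σ) m]
  | succ n ih =>
    -- Adjacent transpositions generate; `(0 1)` is the symmetry of a second derivative, and all
    -- others only permute the arguments of the `n`-th derivative.
    have hσ : σ ∈ Submonoid.closure (range fun i : Fin n ↦ Equiv.swap i.castSucc i.succ) := by
      simp only [Equiv.Perm.mclosure_swap_castSucc_succ, Submonoid.mem_top]
    induction hσ using Submonoid.closure_induction generalizing m with
    | one => rfl
    | mul σ τ _ _ hσ hτ => exact (hτ (m ∘ σ)).trans (hσ m)
    | mem τ hτ =>
      obtain ⟨i, rfl⟩ := hτ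
      rcases n with _ | n
      · exact i.elim0
      cases i using Fin.cases with
      | zero => exact iteratedFDeriv_comp_swap_zero_one hf m
      | succ j =>
        have hdiff : DifferentiableAt 𝕜 (iteratedFDeriv 𝕜 (n + 1) f) x :=
          hf.differentiableAt_iteratedFDeriv (by norm_cast; omega)
        have hhead : (m ∘ Equiv.swap j.succ.castSucc j.succ.succ) 0 = m 0 :=
          congrArg m (Equiv.swap_apply_of_ne_of_ne
            (by rw [← Fin.succ_castSucc]; exact (Fin.succ_ne_zero _).symm)
            (Fin.succ_ne_zero _).symm)
        have htail : Fin.tail (m ∘ Equiv.swap j.succ.castSucc j.succ.succ) =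
            Fin.tail m ∘ Equiv.swap j.castSucc j.succ := by
          ext i
          exact congrArg m ((Fin.succ_injective _).map_swap j.castSucc j.succ i).symm
        rw [hdiff.iteratedFDeriv_succ_apply_left', hdiff.iteratedFDeriv_succ_apply_left',
          hhead, htail]
        congr 1
        apply Filter.EventuallyEq.fderiv_eq
        filter_upwards [hf.eventually (by simp)] with y hy
        exact ih (hy.of_le (by norm_cast; omega)) _ _

end IteratedFDeriv

section TaylorPolynomial

variable {V F : Type*} [NormedAddCommGroup V] [NormedSpace ℝ V]
  [NormedAddCommGroup F] [NormedSpace ℝ F] {f : V → F} {y : V}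

/-- The Taylor polynomial of `f` at `y`, made of the derivatives of order less than `s`
(so of degree at most `s - 1`), as a function of `x`. -/
noncomputable def taylorSum (f : V → F) (s : ℕ) (y x : V) : F :=
  ∑ j ∈ Finset.range s, (j ! : ℝ)⁻¹ • iteratedFDeriv ℝ j f y fun _ ↦ x - y

/-- The coefficients of `taylorSum f s y` as a formal multilinear series, which vanishes from
order `s` on. -/
noncomputable def truncatedTaylorSeries (f : V → F) (s : ℕ) (y : V) :
    FormalMultilinearSeries ℝ V F :=
  fun j ↦ if j < s then (j ! : ℝ)⁻¹ • iteratedFDeriv ℝ j f y else 0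

theorem hasFiniteFPowerSeriesOnBall_taylorSum (f : V → F) (s : ℕ) (y : V) :
    HasFiniteFPowerSeriesOnBall (taylorSum f s y) (truncatedTaylorSeries f s y) y s ⊤ := by
  refine .mk' (fun j hj ↦ by simp [truncatedTaylorSeries, hj.not_gt]) (by simp) fun x _ ↦ ?_
  refine Finset.sum_congr rfl fun j hj ↦ ?_
  simp [truncatedTaylorSeries, Finset.mem_range.1 hj]

theorem contDiff_taylorSum (f : V → F) (s : ℕ) (y : V) {n : WithTop ℕ∞} :
    ContDiff ℝ n (taylorSum f s y) :=
  ContDiff.sum fun j _ ↦ ((iteratedFDeriv ℝ j f y).contDiff.comp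
    (contDiff_pi.2 fun _ ↦ contDiff_id.sub contDiff_const)).const_smul _

variable [CompleteSpace F]

theorem iteratedFDeriv_taylorSum_self {s j : ℕ} (hj : j < s) (hf : ContDiffAt ℝ j f y) :
    iteratedFDeriv ℝ j (taylorSum f s y) y = iteratedFDeriv ℝ j f y := by
  ext m
  have hterm (σ : Equiv.Perm (Fin j)) : truncatedTaylorSeries f s y j (fun i ↦ m (σ i)) =
      (j ! : ℝ)⁻¹ • iteratedFDeriv ℝ j f y m := by
    rw [← iteratedFDeriv_comp_perm_of_contDiffAt hf σ m]
    simp [truncatedTaylorSeries, hj, Function.comp_def]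
  have hfact : (j ! : ℝ) ≠ 0 := by positivity
  rw [(hasFiniteFPowerSeriesOnBall_taylorSum f s y).toHasFPowerSeriesOnBall
    |>.iteratedFDeriv_eq_sum_of_completeSpace]
  simp only [hterm, Finset.sum_const, Finset.card_univ, Fintype.card_perm, Fintype.card_fin,
    ← Nat.cast_smul_eq_nsmul ℝ, smul_inv_smul₀ hfact]

theorem iteratedFDeriv_taylorSum_eq_zero (f : V → F) (s : ℕ) (y x : V) :
    iteratedFDeriv ℝ s (taylorSum f s y) x = 0 := by
  have hx := (hasFiniteFPowerSeriesOnBall_taylorSum f s y).changeOrigin (y := x - y)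
    ENNReal.coe_lt_top
  rw [add_sub_cancel] at hx
  ext m
  rw [hx.toHasFPowerSeriesOnBall.iteratedFDeriv_eq_sum_of_completeSpace]
  simp [hx.finite s le_rfl]

theorem iteratedFDeriv_sub_taylorSum_self {s j : ℕ} (hj : j < s) (hf : ContDiffAt ℝ j f y) :
    iteratedFDeriv ℝ j (f - taylorSum f s y) y = 0 := by
  rw [iteratedFDeriv_sub_apply hf (contDiff_taylorSum f s y).contDiffAt,
    iteratedFDeriv_taylorSum_self hj hf, sub_self]

theorem iteratedFDeriv_sub_taylorSum {s : ℕ} {x : V} (hf : ContDiffAt ℝ s f x) :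
    iteratedFDeriv ℝ s (f - taylorSum f s y) x = iteratedFDeriv ℝ s f x := by
  rw [iteratedFDeriv_sub_apply hf (contDiff_taylorSum f s y).contDiffAt,
    iteratedFDeriv_taylorSum_eq_zero, sub_zero]

end TaylorPolynomial

section MvPolynomial

theorem exists_mvPolynomial_eval_eq_multilinearMap_sub {ι R M : Type*} [Finite ι] [CommRing R]
    [AddCommGroup M] [Module R M] (b : Basis ι R M) {n : ℕ}
    (A : MultilinearMap R (fun _ : Fin n ↦ M) R) (y : M) :
    ∃ p : MvPolynomial ι R, p.totalDegree ≤ n ∧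
      ∀ x, MvPolynomial.eval (b.repr x) p = A fun _ ↦ x - y := by
  classical
  cases nonempty_fintype ι
  refine ⟨∑ a : Fin n → ι, MvPolynomial.C (A fun l ↦ b (a l)) *
    ∏ l, (MvPolynomial.X (a l) - MvPolynomial.C (b.repr y (a l))), ?_, fun x ↦ ?_⟩
  · refine MvPolynomial.totalDegree_finsetSum_le fun a _ ↦ ?_
    calc _ ≤ 0 + ∑ l : Fin n, (MvPolynomial.X (a l) -
            MvPolynomial.C (b.repr y (a l)) : MvPolynomial ι R).totalDegree := by
          refine (MvPolynomial.totalDegree_mul _ _).trans ?_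
          rw [MvPolynomial.totalDegree_C]
          gcongr
          exact MvPolynomial.totalDegree_finsetProd _ _
      _ ≤ 0 + ∑ _l : Fin n, 1 := by
          gcongr with l
          refine (MvPolynomial.totalDegree_sub_C_le _ _).trans ?_
          exact (MvPolynomial.totalDegree_monomial_le _ _).trans (by simp)
      _ = n := by simp
  · have hsub : x - y = ∑ i, (b.repr x i - b.repr y i) • b i := by
      simpa using (b.sum_repr (x - y)).symm
    simp only [hsub, A.map_sum, A.map_smul_univ, map_sum, map_mul, map_prod, map_sub,
      MvPolynomial.eval_C, MvPolynomial.eval_X, smul_eq_mul, mul_comm]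

theorem exists_mvPolynomial_eval_eq_taylorSum {ι V : Type*} [Finite ι] [NormedAddCommGroup V]
    [NormedSpace ℝ V] (b : Basis ι ℝ V) (f : V → ℝ) (s : ℕ) (y : V) :
    ∃ p : MvPolynomial ι ℝ, p.totalDegree ≤ s - 1 ∧
      ∀ x, MvPolynomial.eval (b.repr x) p = taylorSum f s y x := by
  choose p hdeg heval using fun j ↦ exists_mvPolynomial_eval_eq_multilinearMap_sub b
    ((j ! : ℝ)⁻¹ • iteratedFDeriv ℝ j f y).toMultilinearMap y
  refine ⟨∑ j ∈ Finset.range s, p j, ?_, fun x ↦ ?_⟩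
  · refine MvPolynomial.totalDegree_finsetSum_le fun j hj ↦ (hdeg j).trans ?_
    have := Finset.mem_range.1 hj
    omega
  · rw [map_sum]
    exact Finset.sum_congr rfl fun j _ ↦ heval j x

end MvPolynomial

section TaylorEstimate

variable {V F : Type*} [NormedAddCommGroup V] [NormedSpace ℝ V]
  [NormedAddCommGroup F] [NormedSpace ℝ F]

theorem enorm_continuousMultilinearMap_apply_const_le {n : ℕ} (A : V [×n]→L[ℝ] F) (x : V) :
    ‖A fun _ ↦ x‖ₑ ≤ ‖x‖ₑ ^ n * ‖A‖ₑ := by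
  simp only [enorm_eq_nnnorm, ← ENNReal.coe_pow, ← ENNReal.coe_mul, ENNReal.coe_le_coe]
  simpa [mul_comm] using A.le_opNNNorm fun _ ↦ x

theorem enorm_inv_natCast_smul_le (m : ℕ) (x : F) : ‖(m : ℝ)⁻¹ • x‖ₑ ≤ ‖x‖ₑ := by
  rw [← ofReal_norm, ← ofReal_norm]
  gcongr
  rw [norm_smul, norm_inv, Real.norm_natCast]
  exact mul_le_of_le_one_left (norm_nonneg _) (Nat.cast_inv_le_one m)

variable [CompleteSpace F]

theorem enorm_le_sum_add_lintegral_iteratedFDeriv {f : V → F} {x y : V} {n : ℕ}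
    (hf : ∀ z ∈ segment ℝ y x, ContDiffAt ℝ (n + 1) f z) :
    ‖f x‖ₑ ≤ ∑ k ∈ Finset.range (n + 1), ‖x - y‖ₑ ^ k * ‖iteratedFDeriv ℝ k f y‖ₑ +
      ‖x - y‖ₑ ^ (n + 1) * ∫⁻ t in Ioo (0 : ℝ) 1,
        ‖1 - t‖ₑ ^ n * ‖iteratedFDeriv ℝ (n + 1) f (lineMap y x t)‖ₑ := by
  have htaylor := map_add_eq_sum_add_integral_iteratedFDeriv (f := f) (x := y) (y := x - y) (n := n)
    fun t ht ↦ hf _ (by rw [segment_eq_image']; exact mem_image_of_mem _ ht)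
  rw [add_sub_cancel, intervalIntegral.integral_of_le zero_le_one,
    integral_Ioc_eq_integral_Ioo] at htaylor
  rw [htaylor, ← lintegral_const_mul' _ _ (by finiteness)]
  refine (enorm_add_le _ _).trans (add_le_add ((enorm_sum_le _ _).trans ?_) ?_)
  · gcongr with k
    exact (enorm_inv_natCast_smul_le _ _).trans (enorm_continuousMultilinearMap_apply_const_le _ _)
  · refine (enorm_inv_natCast_smul_le _ _).trans ((enorm_integral_le_lintegral_enorm _).trans ?_)
    refine lintegral_mono fun t ↦ ?_
    rw [enorm_smul, enorm_pow, mul_left_comm, lineMap_apply, vadd_eq_add, vsub_eq_sub,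
      add_comm (t • (x - y))]
    gcongr
    exact enorm_continuousMultilinearMap_apply_const_le _ _

end TaylorEstimate

section Jensen

theorem rpow_lintegral_le_lintegral_rpow {α : Type*} [MeasurableSpace α] {μ : Measure α}
    [IsProbabilityMeasure μ] {f : α → ℝ≥0∞} {p : ℝ} (hp : 1 ≤ p) (hf : AEMeasurable f μ) :
    (∫⁻ a, f a ∂μ) ^ p ≤ ∫⁻ a, f a ^ p ∂μ := by
  have hp0 : 0 < p := zero_lt_one.trans_le hp
  have hle := eLpNorm'_le_eLpNorm'_of_exponent_le zero_lt_one hp μ hf.aestronglyMeasurable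
  simpa [eLpNorm', ENNReal.le_rpow_inv_iff hp0] using hle

end Jensen

section TaylorEstimate

variable {V F : Type*} [NormedAddCommGroup V] [NormedSpace ℝ V]
  [NormedAddCommGroup F] [NormedSpace ℝ F]

theorem aemeasurable_enorm_iteratedFDeriv_lineMap {f : V → F} {x y : V} {s : ℕ}
    (hf : ∀ z ∈ segment ℝ y x, ContDiffAt ℝ s f z) :
    AEMeasurable (fun t ↦ ‖iteratedFDeriv ℝ s f (lineMap y x t)‖ₑ)
      (volume.restrict (Ioo (0 : ℝ) 1)) := by
  refine ContinuousOn.aemeasurable (ContinuousOn.enorm fun t ht ↦ ?_) measurableSet_Ioo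
  have hmem : lineMap y x t ∈ segment ℝ y x := lineMap_mem_segment ℝ y x (Ioo_subset_Icc_self ht)
  exact ((hf _ hmem).continuousAt_iteratedFDeriv le_rfl).comp lineMap_continuous.continuousAt
    |>.continuousWithinAt

theorem enorm_iteratedFDeriv_rpow_le_lintegral [CompleteSpace F] {f : V → F} {x y : V}
    {j s : ℕ} {p : ℝ} (hp : 1 ≤ p) (hj : j < s)
    (hf : ∀ z ∈ segment ℝ y x, ContDiffAt ℝ s f z) (hy : ∀ i < s, iteratedFDeriv ℝ i f y = 0) :
    ‖iteratedFDeriv ℝ j f x‖ₑ ^ p ≤ (‖x - y‖ₑ ^ (s - j)) ^ p *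
      ∫⁻ t in Ioo (0 : ℝ) 1, ‖iteratedFDeriv ℝ s f (lineMap y x t)‖ₑ ^ p := by
  obtain ⟨n, rfl⟩ : ∃ n, s = n + 1 + j := ⟨s - j - 1, by omega⟩
  have : IsProbabilityMeasure (volume.restrict (Ioo (0 : ℝ) 1)) := ⟨by simp⟩
  have hcomp (k : ℕ) (z : V) :
      ‖iteratedFDeriv ℝ k (iteratedFDeriv ℝ j f) z‖ₑ = ‖iteratedFDeriv ℝ (k + j) f z‖ₑ := by
    rw [← ofReal_norm, ← ofReal_norm, norm_iteratedFDeriv_iteratedFDeriv]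
  have htaylor := enorm_le_sum_add_lintegral_iteratedFDeriv (f := iteratedFDeriv ℝ j f)
    fun z hz ↦ (hf z hz).iteratedFDeriv_right (m := n + 1) (by norm_cast)
  have hvanish : ∑ k ∈ Finset.range (n + 1),
      ‖x - y‖ₑ ^ k * ‖iteratedFDeriv ℝ k (iteratedFDeriv ℝ j f) y‖ₑ = 0 := by
    refine Finset.sum_eq_zero fun k hk ↦ ?_
    have hzero : ‖iteratedFDeriv ℝ (k + j) f y‖ₑ = 0 := by
      rw [← ofReal_norm, hy _ (by have := Finset.mem_range.1 hk; omega), norm_zero,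
        ENNReal.ofReal_zero]
    rw [hcomp, hzero, mul_zero]
  rw [hvanish, zero_add] at htaylor
  have hweight : ∫⁻ t in Ioo (0 : ℝ) 1, ‖1 - t‖ₑ ^ n *
        ‖iteratedFDeriv ℝ (n + 1) (iteratedFDeriv ℝ j f) (lineMap y x t)‖ₑ ≤
      ∫⁻ t in Ioo (0 : ℝ) 1, ‖iteratedFDeriv ℝ (n + 1 + j) f (lineMap y x t)‖ₑ := by
    refine setLIntegral_mono' measurableSet_Ioo fun t ht ↦ ?_
    rw [hcomp]
    refine mul_le_of_le_one_left' (pow_le_one₀ zero_le ?_)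
    rw [Real.enorm_eq_ofReal (by linarith [ht.2]), ENNReal.ofReal_le_one]
    linarith [ht.1]
  calc _ ≤ (‖x - y‖ₑ ^ (n + 1) * ∫⁻ t in Ioo (0 : ℝ) 1,
          ‖iteratedFDeriv ℝ (n + 1 + j) f (lineMap y x t)‖ₑ) ^ p := by
        gcongr
        grw [htaylor, hweight]
    _ ≤ _ := by
      rw [ENNReal.mul_rpow_of_nonneg _ _ (by positivity), Nat.add_sub_cancel]
      gcongr
      exact rpow_lintegral_le_lintegral_rpow hp (aemeasurable_enorm_iteratedFDeriv_lineMap hf)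

end TaylorEstimate

section Averaging

variable {V : Type*} [NormedAddCommGroup V] [NormedSpace ℝ V] [FiniteDimensional ℝ V]
  [MeasurableSpace V] [BorelSpace V] {μ : Measure V} [μ.IsAddHaarMeasure] {G : V → ℝ≥0∞}

theorem enorm_pow_finrank_mul_lintegral_comp_lineMap (hG : Measurable G) (y : V) {t : ℝ}
    (ht : t ≠ 0) :
    ‖t‖ₑ ^ finrank ℝ V * ∫⁻ x, G (lineMap y x t) ∂μ = ∫⁻ x, G x ∂μ := by
  have hscale : ∫⁻ x, G (t • x + (y - t • y)) ∂μ =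
      ENNReal.ofReal |(t ^ finrank ℝ V)⁻¹| * ∫⁻ x, G (x + (y - t • y)) ∂μ := by
    rw [← lintegral_map (f := fun x ↦ G (x + (y - t • y))) (g := (t • ·)) (by fun_prop)
      (by fun_prop), Measure.map_addHaar_smul μ ht, lintegral_smul_measure, smul_eq_mul]
  have hunit : ‖t‖ₑ ^ finrank ℝ V * ENNReal.ofReal |(t ^ finrank ℝ V)⁻¹| = 1 := by
    rw [← enorm_pow, ← Real.enorm_eq_ofReal_abs, ← enorm_mul, mul_inv_cancel₀ (by positivity),
      enorm_one]
  have hline (x : V) : lineMap y x t = t • x + (y - t • y) := by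
    rw [lineMap_apply_module']; module
  simp only [hline]
  rw [hscale, ← mul_assoc, hunit, one_mul, lintegral_add_right_eq_self]

theorem lintegral_comp_lineMap_le_of_half_le (hG : Measurable G) (y : V) {t : ℝ}
    (ht : 1 / 2 ≤ t) :
    ∫⁻ x, G (lineMap y x t) ∂μ ≤ 2 ^ finrank ℝ V * ∫⁻ x, G x ∂μ := by
  have htwo : 1 ≤ 2 * ‖t‖ₑ := by
    rw [Real.enorm_eq_ofReal (by linarith), ← ENNReal.ofReal_ofNat,
      ← ENNReal.ofReal_mul (by norm_num), ENNReal.one_le_ofReal]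
    linarith
  rw [← enorm_pow_finrank_mul_lintegral_comp_lineMap hG y (by linarith : t ≠ 0), ← mul_assoc,
    ← mul_pow]
  exact le_mul_of_one_le_left' (one_le_pow₀ htwo)

theorem setLIntegral_setLIntegral_comp_lineMap_le (hG : Measurable G) (S : Set V) (t : ℝ) :
    ∫⁻ y in S, ∫⁻ x in S, G (lineMap y x t) ∂μ ∂μ ≤
      2 ^ finrank ℝ V * μ S * ∫⁻ x, G x ∂μ := by
  wlog ht : 1 / 2 ≤ t generalizing t
  · calc _ = ∫⁻ x in S, ∫⁻ y in S, G (lineMap x y (1 - t)) ∂μ ∂μ := by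
          rw [lintegral_lintegral_swap (by fun_prop)]
          simp only [lineMap_apply_one_sub]
      _ ≤ _ := this (1 - t) (by linarith)
  calc _ ≤ ∫⁻ _ in S, 2 ^ finrank ℝ V * ∫⁻ x, G x ∂μ ∂μ := by
        gcongr with y
        exact (setLIntegral_le_lintegral _ _).trans (lintegral_comp_lineMap_le_of_half_le hG y ht)
    _ = _ := by rw [setLIntegral_const, mul_right_comm]

theorem setLIntegral_setLIntegral_lintegral_comp_lineMap_le (hG : Measurable G) (S : Set V) :
    ∫⁻ y in S, ∫⁻ x in S, ∫⁻ t in Ioo (0 : ℝ) 1, G (lineMap y x t) ∂volume ∂μ ∂μ ≤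
      2 ^ finrank ℝ V * μ S * ∫⁻ x, G x ∂μ := by
  calc _ = ∫⁻ t in Ioo (0 : ℝ) 1, ∫⁻ y in S, ∫⁻ x in S, G (lineMap y x t) ∂μ ∂μ := by
        have hmeas : Measurable fun q : (V × ℝ) × V ↦ G (lineMap q.1.1 q.2 q.1.2) := by fun_prop
        refine .trans (lintegral_congr fun y ↦ lintegral_lintegral_swap (by fun_prop)) ?_
        exact lintegral_lintegral_swap hmeas.lintegral_prod_right'.aemeasurable
    _ ≤ ∫⁻ _ in Ioo (0 : ℝ) 1, 2 ^ finrank ℝ V * μ S * ∫⁻ x, G x ∂μ :=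
        lintegral_mono fun t ↦ setLIntegral_setLIntegral_comp_lineMap_le hG S t
    _ = _ := by simp

end Averaging

section StarShaped

variable {V F : Type*} [NormedAddCommGroup V] [NormedSpace ℝ V] [MeasurableSpace V] [BorelSpace V]
  [NormedAddCommGroup F] [NormedSpace ℝ F] {μ : Measure V} {E B : Set V} {f : V → F} {p : ℝ}
  {s : ℕ} {x y : V}

theorem measurable_indicator_enorm_iteratedFDeriv_rpow (hE : IsOpen E) (hf : ContDiffOn ℝ s f E)
    (p : ℝ) : Measurable (E.indicator fun x ↦ ‖iteratedFDeriv ℝ s f x‖ₑ ^ p) := by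
  classical
  rw [← piecewise_eq_indicator]
  refine ContinuousOn.measurable_piecewise ?_ continuousOn_const hE.measurableSet
  refine ENNReal.continuous_rpow_const.comp_continuousOn (ContinuousOn.enorm fun x hx ↦ ?_)
  exact (hf.contDiffAt (hE.mem_nhds hx)).continuousAt_iteratedFDeriv le_rfl
    |>.continuousWithinAt

theorem setLIntegral_iteratedFDeriv_sub_taylorSum_rpow_le [CompleteSpace F] (hp : 1 ≤ p)
    (hE : IsOpen E) (hy : y ∈ E) (hstar : StarConvex ℝ y E) (hf : ContDiffOn ℝ s f E) {r : ℕ}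
    (hr : r < s) :
    ∫⁻ x in E, ‖iteratedFDeriv ℝ r (f - taylorSum f s y) x‖ₑ ^ p ∂μ ≤
      (ediam E ^ (s - r)) ^ p * ∫⁻ x in E, ∫⁻ t in Ioo (0 : ℝ) 1,
        E.indicator (fun z ↦ ‖iteratedFDeriv ℝ s f z‖ₑ ^ p) (lineMap y x t) ∂volume ∂μ := by
  have hfat {z : V} (hz : z ∈ E) : ContDiffAt ℝ s f z := hf.contDiffAt (hE.mem_nhds hz)
  have hmeas : Measurable fun q : V × ℝ ↦
      E.indicator (fun z ↦ ‖iteratedFDeriv ℝ s f z‖ₑ ^ p) (lineMap y q.1 q.2) :=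
    (measurable_indicator_enorm_iteratedFDeriv_rpow hE hf p).comp (by fun_prop)
  rw [← lintegral_const_mul _ hmeas.lintegral_prod_right']
  refine setLIntegral_mono' hE.measurableSet fun x hx ↦ ?_
  have hseg : segment ℝ y x ⊆ E := starConvex_iff_segment_subset.1 hstar hx
  calc _ ≤ (‖x - y‖ₑ ^ (s - r)) ^ p * ∫⁻ t in Ioo (0 : ℝ) 1,
          ‖iteratedFDeriv ℝ s (f - taylorSum f s y) (lineMap y x t)‖ₑ ^ p :=
        enorm_iteratedFDeriv_rpow_le_lintegral hp hr
          (fun z hz ↦ (hfat (hseg hz)).sub (contDiff_taylorSum f s y).contDiffAt)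
          fun i hi ↦ iteratedFDeriv_sub_taylorSum_self hi
            ((hfat hy).of_le (by exact_mod_cast hi.le))
    _ ≤ _ := by
        refine mul_le_mul' ?_ (setLIntegral_congr_fun measurableSet_Ioo fun t ht ↦ ?_).le
        · gcongr
          rw [← edist_eq_enorm_sub]
          exact edist_le_ediam_of_mem hx hy
        · have hmem : lineMap y x t ∈ E :=
            hseg (lineMap_mem_segment ℝ y x (Ioo_subset_Icc_self ht))
          simp only [iteratedFDeriv_sub_taylorSum (hfat hmem), indicator_of_mem hmem]

variable [FiniteDimensional ℝ V] [μ.IsAddHaarMeasure]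

theorem exists_setLIntegral_lintegral_comp_lineMap_le {G : V → ℝ≥0∞} (hG : Measurable G)
    (hBE : B ⊆ E) (hB : μ B ≠ 0) (hB' : μ B ≠ ⊤) :
    ∃ y ∈ B, ∫⁻ x in E, ∫⁻ t in Ioo (0 : ℝ) 1, G (lineMap y x t) ∂volume ∂μ ≤
      2 ^ finrank ℝ V * (μ E / μ B) * ∫⁻ x, G x ∂μ := by
  have hmeas : Measurable fun q : (V × V) × ℝ ↦ G (lineMap q.1.1 q.1.2 q.2) := by fun_prop
  obtain ⟨y, hyB, hy⟩ := exists_le_setLAverage hB hB'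
    (f := fun y ↦ ∫⁻ x in E, ∫⁻ t in Ioo (0 : ℝ) 1, G (lineMap y x t) ∂volume ∂μ)
    hmeas.lintegral_prod_right'.lintegral_prod_right'.aemeasurable
  refine ⟨y, hyB, hy.trans ?_⟩
  calc _ ≤ (∫⁻ y in E, ∫⁻ x in E, ∫⁻ t in Ioo (0 : ℝ) 1,
          G (lineMap y x t) ∂volume ∂μ ∂μ) / μ B := by
        rw [setLAverage_eq]
        gcongr
    _ ≤ 2 ^ finrank ℝ V * μ E * (∫⁻ x, G x ∂μ) / μ B := by
        gcongr
        exact setLIntegral_setLIntegral_lintegral_comp_lineMap_le hG E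
    _ = _ := by simp only [div_eq_mul_inv]; ring

theorem exists_setLIntegral_iteratedFDeriv_sub_taylorSum_rpow_le [CompleteSpace F] (hp : 1 ≤ p)
    (hE : IsOpen E) (hBE : B ⊆ E) (hB : μ B ≠ 0) (hB' : μ B ≠ ⊤)
    (hstar : ∀ y ∈ B, StarConvex ℝ y E) (hf : ContDiffOn ℝ s f E) :
    ∃ y ∈ B, ∀ r ≤ s, ∫⁻ x in E, ‖iteratedFDeriv ℝ r (f - taylorSum f s y) x‖ₑ ^ p ∂μ ≤
      2 ^ finrank ℝ V * (μ E / μ B) * (ediam E ^ (s - r)) ^ p *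
        ∫⁻ x in E, ‖iteratedFDeriv ℝ s f x‖ₑ ^ p ∂μ := by
  obtain ⟨y, hyB, hy⟩ := exists_setLIntegral_lintegral_comp_lineMap_le
    (measurable_indicator_enorm_iteratedFDeriv_rpow hE hf p) hBE hB hB'
  rw [lintegral_indicator hE.measurableSet] at hy
  refine ⟨y, hyB, fun r hr ↦ ?_⟩
  rcases hr.eq_or_lt with rfl | hr
  · have hone : 1 ≤ 2 ^ finrank ℝ V * (μ E / μ B) := by
      refine one_le_mul (one_le_pow₀ one_le_two) ?_
      rw [ENNReal.le_div_iff_mul_le (.inl hB) (.inl hB'), one_mul]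
      exact measure_mono hBE
    rw [setLIntegral_congr_fun hE.measurableSet fun x hx ↦ by
      rw [iteratedFDeriv_sub_taylorSum (hf.contDiffAt (hE.mem_nhds hx))]]
    simpa using le_mul_of_one_le_left' hone
  · grw [setLIntegral_iteratedFDeriv_sub_taylorSum_rpow_le hp hE (hBE hyB) (hstar y hyB) hf hr, hy]
    exact (by ring : _ = _).le

end StarShaped

section SobolevInequality

variable {V F : Type*} [NormedAddCommGroup V] [NormedSpace ℝ V]
  [NormedAddCommGroup F] [NormedSpace ℝ F] {E B : Set V} {f : V → F} {p : ℝ}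
  {n : ℕ} {x y : V}

theorem enorm_rpow_le_sum_add_lintegral_iteratedFDeriv [CompleteSpace F] (hp : 1 ≤ p)
    (hf : ∀ z ∈ segment ℝ y x, ContDiffAt ℝ (n + 1 : ℕ) f z) :
    ‖f x‖ₑ ^ p ≤ (2 * (n + 1)) ^ (p - 1) *
      (∑ k ∈ Finset.range (n + 1), (‖x - y‖ₑ ^ k) ^ p * ‖iteratedFDeriv ℝ k f y‖ₑ ^ p +
        (‖x - y‖ₑ ^ (n + 1)) ^ p * ∫⁻ t in Ioo (0 : ℝ) 1,
          (‖1 - t‖ₑ ^ n) ^ p * ‖iteratedFDeriv ℝ (n + 1) f (lineMap y x t)‖ₑ ^ p) := by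
  have : IsProbabilityMeasure (volume.restrict (Ioo (0 : ℝ) 1)) := ⟨by simp⟩
  have hp0 : 0 ≤ p := zero_le_one.trans hp
  have hp1 : 0 ≤ p - 1 := sub_nonneg.2 hp
  have hone : 1 ≤ ((n : ℝ≥0∞) + 1) ^ (p - 1) := by
    simpa using ENNReal.rpow_le_rpow (le_add_self : 1 ≤ (n : ℝ≥0∞) + 1) hp1
  have hsum := ENNReal.rpow_sum_le_const_mul_sum_rpow (Finset.range (n + 1))
    (fun k ↦ ‖x - y‖ₑ ^ k * ‖iteratedFDeriv ℝ k f y‖ₑ) hp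
  have hjensen := rpow_lintegral_le_lintegral_rpow hp <|
    (by fun_prop : Measurable fun t : ℝ ↦ ‖1 - t‖ₑ ^ n).aemeasurable.mul
      (aemeasurable_enorm_iteratedFDeriv_lineMap hf)
  simp only [Finset.card_range, Nat.cast_add, Nat.cast_one, ENNReal.mul_rpow_of_nonneg _ _ hp0,
    Pi.mul_apply] at hsum hjensen
  grw [enorm_le_sum_add_lintegral_iteratedFDeriv hf, ENNReal.rpow_add_le_mul_rpow_add_rpow _ _ hp,
    ENNReal.mul_rpow_of_nonneg _ _ hp0, hsum, hjensen]
  rw [ENNReal.mul_rpow_of_nonneg _ _ hp1, mul_assoc, mul_add ((_ + 1) ^ _)]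
  exact mul_le_mul' le_rfl (add_le_add_right (le_mul_of_one_le_left' hone) _)

theorem enorm_rpow_le_sum_add_lintegral_of_starConvex [CompleteSpace F] (hp : 1 ≤ p)
    (hE : IsOpen E) (hy : y ∈ E) (hstar : StarConvex ℝ y E) (hf : ContDiffOn ℝ (n + 1 : ℕ) f E)
    (hx : x ∈ E) :
    ‖f x‖ₑ ^ p ≤ (2 * (n + 1)) ^ (p - 1) *
      (∑ k ∈ Finset.range (n + 1), (ediam E ^ k) ^ p * ‖iteratedFDeriv ℝ k f y‖ₑ ^ p +
        (ediam E ^ (n + 1)) ^ p * ∫⁻ t in Ioo (0 : ℝ) 1, (‖1 - t‖ₑ ^ n) ^ p *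
          E.indicator (fun z ↦ ‖iteratedFDeriv ℝ (n + 1) f z‖ₑ ^ p) (lineMap y x t)) := by
  have hseg : segment ℝ y x ⊆ E := starConvex_iff_segment_subset.1 hstar hx
  have hdist : ‖x - y‖ₑ ≤ ediam E := by
    rw [← edist_eq_enorm_sub]
    exact edist_le_ediam_of_mem hx hy
  have hindicator : ∫⁻ t in Ioo (0 : ℝ) 1, (‖1 - t‖ₑ ^ n) ^ p *
        E.indicator (fun z ↦ ‖iteratedFDeriv ℝ (n + 1) f z‖ₑ ^ p) (lineMap y x t) =
      ∫⁻ t in Ioo (0 : ℝ) 1,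
        (‖1 - t‖ₑ ^ n) ^ p * ‖iteratedFDeriv ℝ (n + 1) f (lineMap y x t)‖ₑ ^ p :=
    setLIntegral_congr_fun measurableSet_Ioo fun t ht ↦ by
      simp only [indicator_of_mem
        (hseg (lineMap_mem_segment ℝ y x (Ioo_subset_Icc_self ht)))]
  rw [hindicator]
  grw [enorm_rpow_le_sum_add_lintegral_iteratedFDeriv hp fun z hz ↦
    hf.contDiffAt (hE.mem_nhds (hseg hz)), hdist]

variable [MeasurableSpace V] [BorelSpace V] [FiniteDimensional ℝ V] {μ : Measure V}
  [μ.IsAddHaarMeasure]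

theorem setLIntegral_lintegral_enorm_one_sub_pow_mul_comp_lineMap_le {G : V → ℝ≥0∞}
    (hG : Measurable G) (hp : finrank ℝ V ≤ n * p) (B : Set V) (x : V) :
    ∫⁻ y in B, ∫⁻ t in Ioo (0 : ℝ) 1, (‖1 - t‖ₑ ^ n) ^ p * G (lineMap y x t) ∂volume ∂μ ≤
      ∫⁻ y, G y ∂μ := by
  have hslice {t : ℝ} (ht : t ∈ Ioo (0 : ℝ) 1) :
      ∫⁻ y in B, (‖1 - t‖ₑ ^ n) ^ p * G (lineMap y x t) ∂μ ≤ ∫⁻ y, G y ∂μ := by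
    have hweight : (‖1 - t‖ₑ ^ n) ^ p ≤ ‖1 - t‖ₑ ^ finrank ℝ V := by
      rw [← ENNReal.rpow_natCast, ← ENNReal.rpow_mul, ← ENNReal.rpow_natCast]
      refine ENNReal.rpow_le_rpow_of_exponent_ge ?_ hp
      rw [Real.enorm_eq_ofReal (by linarith [ht.2]), ENNReal.ofReal_le_one]
      linarith [ht.1]
    rw [lintegral_const_mul _ (by fun_prop),
      ← enorm_pow_finrank_mul_lintegral_comp_lineMap hG x (sub_pos.2 ht.2).ne']
    simp only [lineMap_apply_one_sub]
    gcongr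
    exact Measure.restrict_le_self
  calc _ = ∫⁻ t in Ioo (0 : ℝ) 1, ∫⁻ y in B, (‖1 - t‖ₑ ^ n) ^ p * G (lineMap y x t) ∂μ :=
        lintegral_lintegral_swap (by fun_prop)
    _ ≤ ∫⁻ _ in Ioo (0 : ℝ) 1, ∫⁻ y, G y ∂μ :=
        setLIntegral_mono' measurableSet_Ioo fun t ht ↦ hslice ht
    _ = _ := by simp

theorem measure_mul_enorm_rpow_le_sum_setLIntegral_iteratedFDeriv [CompleteSpace F] (hp : 1 ≤ p)
    (hn : finrank ℝ V ≤ n * p) (hE : IsOpen E) (hB : MeasurableSet B) (hBE : B ⊆ E)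
    (hstar : ∀ y ∈ B, StarConvex ℝ y E) (hf : ContDiffOn ℝ (n + 1 : ℕ) f E) (hx : x ∈ E) :
    μ B * ‖f x‖ₑ ^ p ≤ (2 * (n + 1)) ^ (p - 1) * ∑ k ∈ Finset.range (n + 2),
      (ediam E ^ k) ^ p * ∫⁻ y in E, ‖iteratedFDeriv ℝ k f y‖ₑ ^ p ∂μ := by
  have hD {k : ℕ} (hk : k ∈ Finset.range (n + 1)) :
      AEMeasurable (fun y ↦ ‖iteratedFDeriv ℝ k f y‖ₑ ^ p) (μ.restrict B) := by
    have hfk : ContDiffOn ℝ k f E := hf.of_le (by exact_mod_cast (Finset.mem_range.1 hk).le)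
    refine ((aemeasurable_indicator_iff hE.measurableSet).1 ?_).mono_set hBE
    exact (measurable_indicator_enorm_iteratedFDeriv_rpow hE hfk p).aemeasurable
  have hG := measurable_indicator_enorm_iteratedFDeriv_rpow hE hf p
  set G : V → ℝ≥0∞ := E.indicator fun z ↦ ‖iteratedFDeriv ℝ (n + 1) f z‖ₑ ^ p
  have hweighted : Measurable fun q : V × ℝ ↦ (‖1 - q.2‖ₑ ^ n) ^ p * G (lineMap q.1 x q.2) := by
    fun_prop
  calc μ B * ‖f x‖ₑ ^ p = ∫⁻ _ in B, ‖f x‖ₑ ^ p ∂μ := by rw [setLIntegral_const, mul_comm]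
    _ ≤ ∫⁻ y in B, (2 * (n + 1)) ^ (p - 1) *
          (∑ k ∈ Finset.range (n + 1), (ediam E ^ k) ^ p * ‖iteratedFDeriv ℝ k f y‖ₑ ^ p +
            (ediam E ^ (n + 1)) ^ p *
              ∫⁻ t in Ioo (0 : ℝ) 1, (‖1 - t‖ₑ ^ n) ^ p * G (lineMap y x t)) ∂μ :=
        setLIntegral_mono' hB fun y hy ↦
          enorm_rpow_le_sum_add_lintegral_of_starConvex hp hE (hBE hy) (hstar y hy) hf hx
    _ = (2 * (n + 1)) ^ (p - 1) * (∑ k ∈ Finset.range (n + 1), (ediam E ^ k) ^ p *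
            ∫⁻ y in B, ‖iteratedFDeriv ℝ k f y‖ₑ ^ p ∂μ + (ediam E ^ (n + 1)) ^ p *
          ∫⁻ y in B, ∫⁻ t in Ioo (0 : ℝ) 1,
            (‖1 - t‖ₑ ^ n) ^ p * G (lineMap y x t) ∂volume ∂μ) := by
        have hlast := hweighted.lintegral_prod_right' (ν := volume.restrict (Ioo (0 : ℝ) 1))
        rw [lintegral_const_mul', lintegral_add_right _ (hlast.const_mul _),
          lintegral_finsetSum' _ fun k hk ↦ (hD hk).const_mul _, lintegral_const_mul _ hlast]
        · congr! 3 with k hk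
          exact lintegral_const_mul'' _ (hD hk)
        · finiteness
    _ ≤ _ := by
        rw [Finset.sum_range_succ _ (n + 1)]
        grw [setLIntegral_lintegral_enorm_one_sub_pow_mul_comp_lineMap_le hG hn, hBE,
          lintegral_indicator hE.measurableSet]

end SobolevInequality

section Volume

variable {V : Type*} [NormedAddCommGroup V] [NormedSpace ℝ V] [MeasurableSpace V] [BorelSpace V]
  [FiniteDimensional ℝ V] {μ : Measure V} [μ.IsAddHaarMeasure] {E : Set V} {z : V} {ρ R : ℝ≥0}

theorem addHaar_le_ediam_pow_mul (hE : ediam E ≠ ⊤) :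
    μ E ≤ ediam E ^ finrank ℝ V * μ (ball 0 1) := by
  obtain rfl | ⟨x, hx⟩ := E.eq_empty_or_nonempty
  · simp
  have hsub : E ⊆ closedBall x (diam E) := fun y hy ↦ dist_le_diam_of_mem' hE hy hx
  calc μ E ≤ μ (closedBall x (diam E)) := measure_mono hsub
    _ = _ := by
      rw [Measure.addHaar_closedBall μ x diam_nonneg, ENNReal.ofReal_pow diam_nonneg, diam,
        ENNReal.ofReal_toReal hE]

theorem mul_ediam_pow_mul_le_addHaar_ball (hR : 0 < R) (hER : ρ * ediam E ≤ R) :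
    (ρ * ediam E) ^ finrank ℝ V * μ (ball 0 1) ≤ μ (ball z R) := by
  rw [Measure.addHaar_ball_of_pos μ z (NNReal.coe_pos.2 hR), ENNReal.ofReal_pow R.coe_nonneg,
    ENNReal.ofReal_coe_nnreal]
  gcongr

theorem addHaar_div_addHaar_ball_le (hρ : ρ ≠ 0) (hR : 0 < R) (hER : ρ * ediam E ≤ R) :
    μ E / μ (ball z R) ≤ (ρ⁻¹ : ℝ≥0) ^ finrank ℝ V := by
  have hE : ediam E ≠ ⊤ := fun h ↦ by simp [h, hρ] at hER
  refine ENNReal.div_le_of_le_mul ?_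
  calc μ E ≤ ediam E ^ finrank ℝ V * μ (ball 0 1) := addHaar_le_ediam_pow_mul hE
    _ = (ρ⁻¹ : ℝ≥0) ^ finrank ℝ V * ((ρ * ediam E) ^ finrank ℝ V * μ (ball 0 1)) := by
      rw [← mul_assoc, ← mul_pow, ← mul_assoc, ← ENNReal.coe_mul, inv_mul_cancel₀ hρ,
        ENNReal.coe_one, one_mul]
    _ ≤ _ := by
      gcongr
      exact mul_ediam_pow_mul_le_addHaar_ball hR hER

end Volume

theorem ediam_ne_zero_of_ball_subset {V : Type*} [NormedAddCommGroup V] [NormedSpace ℝ V]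
    [Nontrivial V] {E : Set V} {z : V} {R : ℝ} (hR : 0 < R) (hBE : ball z R ⊆ E) :
    ediam E ≠ 0 := fun h ↦ by
  have hdiam := diam_subsingleton ((ediam_eq_zero_iff.1 h).anti hBE)
  rw [diam_ball_eq z hR.le] at hdiam
  linarith

section BrambleHilbert

variable {V F : Type*} [NormedAddCommGroup V] [NormedSpace ℝ V] [MeasurableSpace V] [BorelSpace V]
  [FiniteDimensional ℝ V] [NormedAddCommGroup F] [NormedSpace ℝ F] [CompleteSpace F]
  {μ : Measure V} [μ.IsAddHaarMeasure] {E B : Set V} {f : V → F} {z x : V} {p ρ R : ℝ≥0} {s n : ℕ}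

theorem exists_eLpNorm_iteratedFDeriv_sub_taylorSum_le (hp : 1 ≤ p) (hρ : ρ ≠ 0) (hR : 0 < R)
    (hER : ρ * ediam E ≤ R) (hE : IsOpen E) (hBE : ball z R ⊆ E)
    (hstar : ∀ y ∈ ball z R, StarConvex ℝ y E) (hf : ContDiffOn ℝ s f E) :
    ∃ y ∈ ball z R, ∀ r ≤ s,
      eLpNorm (iteratedFDeriv ℝ r (f - taylorSum f s y)) p (μ.restrict E) ≤
        (2 / ρ : ℝ≥0) ^ (finrank ℝ V / p : ℝ) * ediam E ^ (s - r) *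
          eLpNorm (iteratedFDeriv ℝ s f) p (μ.restrict E) := by
  have hp0 : p ≠ 0 := (zero_lt_one.trans_le hp).ne'
  have hpos : (0 : ℝ) < p := NNReal.coe_pos.2 (pos_of_ne_zero hp0)
  obtain ⟨y, hy, hyr⟩ := exists_setLIntegral_iteratedFDeriv_sub_taylorSum_rpow_le (μ := μ)
    (p := p) hp hE hBE (measure_ball_pos μ z hR).ne' measure_ball_lt_top.ne hstar hf
  refine ⟨y, hy, fun r hr ↦ ?_⟩
  have hconst : 2 ^ finrank ℝ V * (μ E / μ (ball z R)) ≤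
      ((2 / ρ : ℝ≥0) ^ (finrank ℝ V / p : ℝ) : ℝ≥0∞) ^ (p : ℝ) := by
    rw [← ENNReal.rpow_mul, div_mul_cancel₀ _ hpos.ne', ENNReal.rpow_natCast,
      div_eq_mul_inv 2 ρ, ENNReal.coe_mul, mul_pow]
    exact mul_le_mul_right (addHaar_div_addHaar_ball_le hρ hR hER) _
  rw [← ENNReal.rpow_le_rpow_iff hpos, ENNReal.mul_rpow_of_nonneg _ _ hpos.le,
    ENNReal.mul_rpow_of_nonneg _ _ hpos.le, eLpNorm_nnreal_pow_eq_lintegral hp0,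
    eLpNorm_nnreal_pow_eq_lintegral hp0]
  exact (hyr r hr).trans (by gcongr)

theorem measure_rpow_inv_mul_enorm_le_of_eLpNorm_iteratedFDeriv_le (hp : 1 ≤ p)
    (hn : finrank ℝ V ≤ n * (p : ℝ)) (hE : IsOpen E) (hB : MeasurableSet B) (hBE : B ⊆ E)
    (hstar : ∀ y ∈ B, StarConvex ℝ y E) (hf : ContDiffOn ℝ (n + 1 : ℕ) f E) {M : ℝ≥0∞}
    (hM : ∀ k ≤ n + 1, ediam E ^ k * eLpNorm (iteratedFDeriv ℝ k f) p (μ.restrict E) ≤ M)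
    (hx : x ∈ E) :
    μ B ^ (p⁻¹ : ℝ) * ‖f x‖ₑ ≤ 2 * (n + 2) * M := by
  have hp0 : p ≠ 0 := (zero_lt_one.trans_le hp).ne'
  have hpos : (0 : ℝ) < p := NNReal.coe_pos.2 (pos_of_ne_zero hp0)
  have hsub : (0 : ℝ) ≤ p - 1 := sub_nonneg.2 hp
  have hterm : ∀ k ∈ Finset.range (n + 2), (ediam E ^ k) ^ (p : ℝ) *
      ∫⁻ y in E, ‖iteratedFDeriv ℝ k f y‖ₑ ^ (p : ℝ) ∂μ ≤ M ^ (p : ℝ) := fun k hk ↦ by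
    rw [← eLpNorm_nnreal_pow_eq_lintegral hp0, ← ENNReal.mul_rpow_of_nonneg _ _ hpos.le]
    gcongr
    exact hM k (Nat.lt_succ_iff.1 (Finset.mem_range.1 hk))
  rw [← ENNReal.rpow_le_rpow_iff hpos, ENNReal.mul_rpow_of_nonneg _ _ hpos.le,
    ENNReal.rpow_inv_rpow hpos.ne', ENNReal.mul_rpow_of_nonneg _ _ hpos.le]
  calc μ B * ‖f x‖ₑ ^ (p : ℝ) ≤ (2 * (n + 1)) ^ (p - 1 : ℝ) * ∑ k ∈ Finset.range (n + 2),
        (ediam E ^ k) ^ (p : ℝ) * ∫⁻ y in E, ‖iteratedFDeriv ℝ k f y‖ₑ ^ (p : ℝ) ∂μ :=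
      measure_mul_enorm_rpow_le_sum_setLIntegral_iteratedFDeriv hp hn hE hB hBE hstar hf hx
    _ ≤ (2 * (n + 2)) ^ (p - 1 : ℝ) * (2 * (n + 2) * M ^ (p : ℝ)) := by
      refine mul_le_mul' (ENNReal.rpow_le_rpow (by gcongr; norm_num) hsub) ?_
      grw [Finset.sum_le_card_nsmul _ _ _ hterm, Finset.card_range, nsmul_eq_mul]
      gcongr
      push_cast
      exact le_mul_of_one_le_left' one_le_two
    _ = (2 * (n + 2)) ^ (p : ℝ) * M ^ (p : ℝ) := by
      rw [← mul_assoc]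
      nth_rw 2 [← ENNReal.rpow_one (2 * (n + 2))]
      rw [← ENNReal.rpow_add_of_nonneg _ _ hsub zero_le_one, sub_add_cancel]

variable [Nontrivial V]

theorem enorm_le_of_eLpNorm_iteratedFDeriv_le (hp : 1 ≤ p) (hn : (finrank ℝ V / p : ℝ) ≤ n)
    (hρ : ρ ≠ 0) (hR : 0 < R) (hER : ρ * ediam E ≤ R) (hE : IsOpen E) (hBE : ball z R ⊆ E)
    (hstar : ∀ y ∈ ball z R, StarConvex ℝ y E) (hf : ContDiffOn ℝ (n + 1 : ℕ) f E) {M : ℝ≥0∞}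
    (hM : ∀ k ≤ n + 1, ediam E ^ k * eLpNorm (iteratedFDeriv ℝ k f) p (μ.restrict E) ≤ M)
    (hx : x ∈ E) :
    ‖f x‖ₑ ≤ 2 * (n + 2) * (ρ ^ finrank ℝ V * μ (ball 0 1)) ^ (-(p : ℝ)⁻¹) *
      (ediam E ^ (-(finrank ℝ V / p) : ℝ) * M) := by
  have hpos : (0 : ℝ) < p := NNReal.coe_pos.2 (zero_lt_one.trans_le hp)
  have hh0 : ediam E ≠ 0 := ediam_ne_zero_of_ball_subset (NNReal.coe_pos.2 hR) hBE
  have hh : ediam E ≠ ⊤ := fun h ↦ by simp [h, hρ] at hER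
  have hω0 : μ (ball (0 : V) 1) ≠ 0 := (measure_ball_pos μ 0 one_pos).ne'
  have hω : μ (ball (0 : V) 1) ≠ ⊤ := measure_ball_lt_top.ne
  set c : ℝ≥0∞ := ρ ^ finrank ℝ V * μ (ball 0 1)
  have hc0 : c ^ (p⁻¹ : ℝ) ≠ 0 := by simp [c, hω0, hρ]
  have hc : c ^ (p⁻¹ : ℝ) ≠ ⊤ := by finiteness
  have hsplit : c ^ (p⁻¹ : ℝ) * ediam E ^ (finrank ℝ V / p : ℝ) ≤ μ (ball z R) ^ (p⁻¹ : ℝ) := by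
    grw [← mul_ediam_pow_mul_le_addHaar_ball hR hER]
    rw [div_eq_mul_inv, ENNReal.rpow_mul, ← ENNReal.mul_rpow_of_nonneg _ _ (by positivity),
      ENNReal.rpow_natCast, mul_pow, mul_right_comm]
  have hsup : c ^ (p⁻¹ : ℝ) * (ediam E ^ (finrank ℝ V / p : ℝ) * ‖f x‖ₑ) ≤ 2 * (n + 2) * M := by
    grw [← mul_assoc, hsplit]
    exact measure_rpow_inv_mul_enorm_le_of_eLpNorm_iteratedFDeriv_le hp
      ((div_le_iff₀ hpos).1 hn) hE measurableSet_ball hBE hstar hf hM hx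
  rw [ENNReal.mul_le_iff_le_inv hc0 hc, ENNReal.mul_le_iff_le_inv
    (by simp [hh0, hh]) (by finiteness)] at hsup
  rw [ENNReal.rpow_neg, ENNReal.rpow_neg]
  exact hsup.trans_eq (by ring)

theorem enorm_le_ediam_rpow_mul_of_eLpNorm_iteratedFDeriv_le (hp : 1 ≤ p)
    (hs : (finrank ℝ V / p : ℝ) + 1 ≤ s) (hρ : ρ ≠ 0) (hR : 0 < R) (hER : ρ * ediam E ≤ R)
    (hE : IsOpen E) (hBE : ball z R ⊆ E) (hstar : ∀ y ∈ ball z R, StarConvex ℝ y E)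
    (hf : ContDiffOn ℝ s f E) {M : ℝ≥0∞}
    (hM : ∀ r ≤ s, eLpNorm (iteratedFDeriv ℝ r f) p (μ.restrict E) ≤ ediam E ^ (s - r) * M)
    (hx : x ∈ E) :
    ‖f x‖ₑ ≤ 2 * (⌈(finrank ℝ V / p : ℝ)⌉₊ + 2) *
      (ρ ^ finrank ℝ V * μ (ball 0 1)) ^ (-(p : ℝ)⁻¹) *
      (ediam E ^ (s - finrank ℝ V / p : ℝ) * M) := by
  set n := ⌈(finrank ℝ V / p : ℝ)⌉₊
  have hns : n + 1 ≤ s := by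
    rw [← Nat.ceil_add_one (by positivity)]
    exact Nat.ceil_le.2 hs
  have hh0 : ediam E ≠ 0 := ediam_ne_zero_of_ball_subset (NNReal.coe_pos.2 hR) hBE
  have hh : ediam E ≠ ⊤ := fun h ↦ by simp [h, hρ] at hER
  have hscaled : ∀ k ≤ n + 1,
      ediam E ^ k * eLpNorm (iteratedFDeriv ℝ k f) p (μ.restrict E) ≤ ediam E ^ s * M :=
    fun k hk ↦ by
      grw [hM k (hk.trans hns)]
      rw [← mul_assoc, ← pow_add, Nat.add_sub_of_le (hk.trans hns)]
  rw [sub_eq_neg_add, ENNReal.rpow_add _ _ hh0 hh, ENNReal.rpow_natCast, mul_assoc (_ ^ _)]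
  exact enorm_le_of_eLpNorm_iteratedFDeriv_le hp (Nat.le_ceil _) hρ hR hER hE hBE hstar
    (hf.of_le (by exact_mod_cast hns)) hscaled hx

theorem exists_mvPolynomial_eLpNorm_iteratedFDeriv_sub_le {ι : Type*} (b : Basis ι ℝ V)
    (μ : Measure V) [μ.IsAddHaarMeasure] (hp : 1 ≤ p) (hρ : ρ ≠ 0) :
    ∃ C : ℝ≥0, ∀ (E : Set V) (z : V) (R : ℝ≥0), IsOpen E → 0 < R → ρ * ediam E ≤ R →
      ball z R ⊆ E → (∀ y ∈ ball z R, StarConvex ℝ y E) →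
      ∀ (s : ℕ) (v : V → ℝ), ContDiffOn ℝ s v E →
      ∃ P : MvPolynomial ι ℝ, P.totalDegree ≤ s - 1 ∧
        (∀ r ≤ s,
          eLpNorm (iteratedFDeriv ℝ r fun x ↦ v x - P.eval (b.repr x)) p (μ.restrict E) ≤
          C * ediam E ^ (s - r) * eLpNorm (iteratedFDeriv ℝ s v) p (μ.restrict E)) ∧
        ((finrank ℝ V / p : ℝ) + 1 ≤ s → ∀ x ∈ E, ‖v x - P.eval (b.repr x)‖ₑ ≤
          C * ediam E ^ (s - finrank ℝ V / p : ℝ) *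
            eLpNorm (iteratedFDeriv ℝ s v) p (μ.restrict E)) := by
  have : Finite ι := Module.Finite.finite_basis b
  set C₁ : ℝ≥0∞ := (2 / ρ : ℝ≥0) ^ (finrank ℝ V / p : ℝ)
  set C₂ : ℝ≥0∞ := 2 * (⌈(finrank ℝ V / p : ℝ)⌉₊ + 2) *
    (ρ ^ finrank ℝ V * μ (ball 0 1)) ^ (-(p : ℝ)⁻¹)
  have hω0 : μ (ball (0 : V) 1) ≠ 0 := (measure_ball_pos μ 0 one_pos).ne'
  have hω : μ (ball (0 : V) 1) ≠ ⊤ := measure_ball_lt_top.ne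
  obtain ⟨C, hC⟩ : ∃ C : ℝ≥0, C = C₁ + C₂ * C₁ :=
    ⟨_, ENNReal.coe_toNNReal (by finiteness)⟩
  refine ⟨C, fun E z R hE hR hER hBE hstar s v hv ↦ ?_⟩
  obtain ⟨y, -, hLp⟩ :=
    exists_eLpNorm_iteratedFDeriv_sub_taylorSum_le (μ := μ) hp hρ hR hER hE hBE hstar hv
  obtain ⟨P, hPdeg, hP⟩ := exists_mvPolynomial_eval_eq_taylorSum b v s y
  refine ⟨P, hPdeg, ?_⟩
  simp only [hP, hC]
  refine ⟨fun r hr ↦ (hLp r hr).trans (by gcongr; exact le_self_add), fun hs x hx ↦ ?_⟩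
  calc ‖v x - taylorSum v s y x‖ₑ ≤ C₂ * (ediam E ^ (s - finrank ℝ V / p : ℝ) *
        (C₁ * eLpNorm (iteratedFDeriv ℝ s v) p (μ.restrict E))) :=
      enorm_le_ediam_rpow_mul_of_eLpNorm_iteratedFDeriv_le hp hs hρ hR hER hE hBE hstar
        (hv.sub (contDiff_taylorSum v s y).contDiffOn)
        (fun r hr ↦ (hLp r hr).trans_eq (by ring)) hx
    _ = C₂ * C₁ * ediam E ^ (s - finrank ℝ V / p : ℝ) *
          eLpNorm (iteratedFDeriv ℝ s v) p (μ.restrict E) := by ring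
    _ ≤ _ := by gcongr; exact le_add_self

end BrambleHilbert

section RealIntegrals

variable {V F : Type*} [NormedAddCommGroup V] [NormedSpace ℝ V] [MeasurableSpace V] [BorelSpace V]
  [ProperSpace V] [NormedAddCommGroup F] [NormedSpace ℝ F] {μ : Measure V}
  [IsFiniteMeasureOnCompacts μ] {E U : Set V} {f : V → F} {r : ℕ}

theorem memLp_iteratedFDeriv_of_closure_subset {p : ℝ≥0∞} (hEb : Bornology.IsBounded E)
    (hU : IsOpen U) (hEU : closure E ⊆ U) (hf : ContDiffOn ℝ r f U) :
    MemLp (iteratedFDeriv ℝ r f) p (μ.restrict E) := by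
  have hK : IsCompact (closure E) := hEb.isCompact_closure
  have hcont : ContinuousOn (iteratedFDeriv ℝ r f) (closure E) := fun x hx ↦
    (hf.contDiffAt (hU.mem_nhds (hEU hx))).continuousAt_iteratedFDeriv le_rfl
      |>.continuousWithinAt
  obtain ⟨C, hC⟩ := hK.exists_bound_of_continuousOn hcont
  have : IsFiniteMeasure (μ.restrict (closure E)) :=
    isFiniteMeasure_restrict.2 hK.measure_lt_top.ne
  refine MemLp.mono_measure (Measure.restrict_mono_set μ subset_closure) ?_
  exact .of_bound (hcont.aestronglyMeasurable_of_isCompact hK isClosed_closure.measurableSet) C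
    ((ae_restrict_iff' isClosed_closure.measurableSet).2 (.of_forall hC))

theorem toReal_eLpNorm_iteratedFDeriv_eq_integral {p : ℝ≥0} (hp : p ≠ 0) (hE : MeasurableSet E)
    (hEb : Bornology.IsBounded E) (hU : IsOpen U) (hEU : closure E ⊆ U)
    (hf : ContDiffOn ℝ r f U) :
    (eLpNorm (iteratedFDeriv ℝ r f) p (μ.restrict E)).toReal =
      (∫ x in E, ‖iteratedFDerivWithin ℝ r f U x‖ ^ (p : ℝ) ∂μ) ^ (p : ℝ)⁻¹ := by
  rw [(memLp_iteratedFDeriv_of_closure_subset hEb hU hEU hf).eLpNorm_eq_integral_rpow_norm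
    (by exact_mod_cast hp) ENNReal.coe_ne_top, ENNReal.coe_toReal,
    ENNReal.toReal_ofReal (by positivity)]
  congr 1
  refine setIntegral_congr_fun hE fun x hx ↦ ?_
  simp only [iteratedFDerivWithin_of_isOpen r hU (hEU (subset_closure hx))]

theorem integral_iteratedFDerivWithin_rpow_le_of_eLpNorm_le {g : V → F} {p : ℝ≥0} {s : ℕ}
    {K : ℝ≥0∞} (hp : p ≠ 0) (hE : MeasurableSet E) (hEb : Bornology.IsBounded E) (hU : IsOpen U)
    (hEU : closure E ⊆ U) (hg : ContDiffOn ℝ r g U) (hf : ContDiffOn ℝ s f U) (hK : K ≠ ⊤)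
    (hgf : eLpNorm (iteratedFDeriv ℝ r g) p (μ.restrict E) ≤
      K * eLpNorm (iteratedFDeriv ℝ s f) p (μ.restrict E)) :
    ∫ x in E, ‖iteratedFDerivWithin ℝ r g U x‖ ^ (p : ℝ) ∂μ ≤
      K.toReal ^ (p : ℝ) * ∫ x in E, ‖iteratedFDerivWithin ℝ s f U x‖ ^ (p : ℝ) ∂μ := by
  have hpos : (0 : ℝ) < p := NNReal.coe_pos.2 (pos_of_ne_zero hp)
  have hf_top : eLpNorm (iteratedFDeriv ℝ s f) p (μ.restrict E) ≠ ⊤ :=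
    (memLp_iteratedFDeriv_of_closure_subset hEb hU hEU hf).eLpNorm_ne_top
  have hroot := ENNReal.toReal_mono (by finiteness) hgf
  rwa [ENNReal.toReal_mul, toReal_eLpNorm_iteratedFDeriv_eq_integral hp hE hEb hU hEU hg,
    toReal_eLpNorm_iteratedFDeriv_eq_integral hp hE hEb hU hEU hf,
    Real.rpow_inv_le_iff_of_pos (by positivity) (by positivity) hpos,
    Real.mul_rpow (by positivity) (by positivity),
    Real.rpow_inv_rpow (by positivity) hpos.ne'] at hroot

end RealIntegrals

theorem bramble_hilbert_general {V ι : Type*} [NormedAddCommGroup V] [NormedSpace ℝ V]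
    [MeasurableSpace V] [BorelSpace V] [FiniteDimensional ℝ V] [Nontrivial V]
    (b : Basis ι ℝ V) (μ : Measure V) [μ.IsAddHaarMeasure] {p ρ : ℝ} (hp : 1 ≤ p) (hρ : 0 < ρ) :
    ∃ C : ℝ, 0 < C ∧
      ∀ E : Set V, IsOpen E → Bornology.IsBounded E →
      (∃ (z : V) (R : ℝ), 0 < R ∧ ρ * diam E ≤ R ∧ ball z R ⊆ E ∧
        ∀ x ∈ E, ∀ y ∈ ball z R, segment ℝ x y ⊆ E) →
      ∀ (s : ℕ) (v : V → ℝ) (U : Set V), IsOpen U → closure E ⊆ U → ContDiffOn ℝ s v U →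
      ∃ P : MvPolynomial ι ℝ, P.totalDegree ≤ s - 1 ∧
        (∀ r ≤ s,
          ∫ x in E, ‖iteratedFDerivWithin ℝ r (fun y ↦ v y - P.eval (b.repr y)) U x‖ ^ p ∂μ ≤
            C * (diam E ^ (s - r)) ^ p * ∫ x in E, ‖iteratedFDerivWithin ℝ s v U x‖ ^ p ∂μ) ∧
        (finrank ℝ V / p + 1 ≤ s → ∀ x ∈ E, |v x - P.eval (b.repr x)| ≤
          C * diam E ^ (s - finrank ℝ V / p) *
            (∫ x in E, ‖iteratedFDerivWithin ℝ s v U x‖ ^ p ∂μ) ^ p⁻¹) := by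
  lift ρ to ℝ≥0 using hρ.le
  lift p to ℝ≥0 using zero_le_one.trans hp
  have hp0 : p ≠ 0 := (zero_lt_one.trans_le (NNReal.one_le_coe.1 hp)).ne'
  obtain ⟨C, hC⟩ := exists_mvPolynomial_eLpNorm_iteratedFDeriv_sub_le b μ
    (NNReal.one_le_coe.1 hp) (NNReal.coe_pos.1 hρ).ne'
  refine ⟨(C + 1) ^ (p : ℝ), by positivity,
    fun E hE hEb ⟨z, R, hR, hER, hBE, hstar⟩ s v U hU hEU hv ↦ ?_⟩
  lift R to ℝ≥0 using hR.le
  have hh : ediam E ≠ ⊤ := hEb.ediam_ne_top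
  obtain ⟨P, hPdeg, hLp, hsup⟩ := hC E z R hE (NNReal.coe_pos.1 hR)
    ((ENNReal.toReal_le_toReal (by finiteness) ENNReal.coe_ne_top).1
      (by rwa [ENNReal.toReal_mul])) hBE
    (fun y hy ↦ starConvex_iff_segment_subset.2 fun x hx ↦ segment_symm ℝ y x ▸ hstar x hx y hy)
    s v (hv.mono (subset_closure.trans hEU))
  have : Finite ι := Module.Finite.finite_basis b
  have hP : ContDiff ℝ s fun x ↦ P.eval (b.repr x) :=
    (AnalyticOnNhd.eval_linearMap b.equivFun.toLinearMap P).contDiff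
  refine ⟨P, hPdeg, fun r hr ↦ ?_, fun hs x hx ↦ ?_⟩
  · have hint := integral_iteratedFDerivWithin_rpow_le_of_eLpNorm_le hp0 hE.measurableSet hEb hU
      hEU ((hv.sub hP.contDiffOn).of_le (by exact_mod_cast hr)) hv (by finiteness) (hLp r hr)
    rw [ENNReal.toReal_mul, ENNReal.toReal_pow, ENNReal.coe_toReal,
      Real.mul_rpow C.coe_nonneg (by positivity)] at hint
    grw [hint, ← le_add_of_nonneg_right zero_le_one, diam]
  · have hexp : (0 : ℝ) ≤ s - finrank ℝ V / p := by linarith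
    have hv_top : eLpNorm (iteratedFDeriv ℝ s v) p (μ.restrict E) ≠ ⊤ :=
      (memLp_iteratedFDeriv_of_closure_subset hEb hU hEU hv).eLpNorm_ne_top
    have hreal := ENNReal.toReal_mono (by finiteness) (hsup hs x hx)
    rw [ENNReal.toReal_mul, ENNReal.toReal_mul, ← ENNReal.toReal_rpow, ENNReal.coe_toReal,
      toReal_enorm, Real.norm_eq_abs,
      toReal_eLpNorm_iteratedFDeriv_eq_integral hp0 hE.measurableSet hEb hU hEU hv] at hreal
    grw [hreal, ← Real.self_le_rpow_of_one_le (le_add_of_nonneg_left C.coe_nonneg) hp,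
      ← le_add_of_nonneg_right zero_le_one, diam]

/-- **Bramble–Hilbert, L² form.** For every `k ∈ ℕ` and `ρ ∈ (0,1]` there is
`C > 0` (depending only on `k` and `ρ`) such that: for every bounded open set
`E ⊂ ℝ²` of diameter `h_E` that is star-shaped with respect to an open ball of radius at
least `ρ·h_E` contained in `E`, for all integers `0 ≤ r ≤ s ≤ k+1`, and every `v` smooth on
an open neighborhood `U` of the closure of `E`, there is a polynomial `p` of total degree
`≤ k` with `∫_E ‖D^r(v-p)‖² ≤ C · h_E^{2(s-r)} · ∫_E ‖D^s v‖²`; moreover if `s ≥ 2` the same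
`p` satisfies `sup_E |v - p| ≤ C · h_E^{s-1} · (∫_E ‖D^s v‖²)^{1/2}`. -/
theorem bramble_hilbert (k : ℕ) (ρ : ℝ) (hρ0 : 0 < ρ) (hρ1 : ρ ≤ 1) :
    ∃ C : ℝ, 0 < C ∧
      ∀ (E : Set (EuclideanSpace ℝ (Fin 2))), IsOpen E → Bornology.IsBounded E →
      -- `E` is star-shaped with respect to an open ball of radius `≥ ρ · h_E` contained in `E`
      (∃ (z : EuclideanSpace ℝ (Fin 2)) (ρ' : ℝ), 0 < ρ' ∧ ρ * Metric.diam E ≤ ρ' ∧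
        Metric.ball z ρ' ⊆ E ∧
        ∀ x ∈ E, ∀ y ∈ Metric.ball z ρ', segment ℝ x y ⊆ E) →
      ∀ (r s : ℕ), r ≤ s → s ≤ k + 1 →
      ∀ (v : EuclideanSpace ℝ (Fin 2) → ℝ) (U : Set (EuclideanSpace ℝ (Fin 2))),
        IsOpen U → closure E ⊆ U → ContDiffOn ℝ (⊤ : ℕ∞) v U →
      ∃ p : MvPolynomial (Fin 2) ℝ, p.totalDegree ≤ k ∧
        (∫ x in E,
            ‖iteratedFDerivWithin ℝ r
                (fun y => v y - MvPolynomial.eval (fun i => y i) p) U x‖ ^ 2) ≤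
          C * Metric.diam E ^ (2 * (s - r)) *
            (∫ x in E, ‖iteratedFDerivWithin ℝ s v U x‖ ^ 2) ∧
        (2 ≤ s → ∀ x ∈ E,
          |v x - MvPolynomial.eval (fun i => x i) p| ≤
            C * Metric.diam E ^ (s - 1) *
              (∫ x in E, ‖iteratedFDerivWithin ℝ s v U x‖ ^ 2) ^ ((1 : ℝ) / 2)) := by
  have hcoord (x : EuclideanSpace ℝ (Fin 2)) :
      ⇑((EuclideanSpace.basisFun (Fin 2) ℝ).toBasis.repr x) = x := by ext; simp
  obtain ⟨C, hC0, hC⟩ := bramble_hilbert_general (EuclideanSpace.basisFun (Fin 2) ℝ).toBasis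
    volume one_le_two hρ0
  refine ⟨C, hC0, fun E hE hEb hstar r s hrs hsk v U hU hEU hv ↦ ?_⟩
  obtain ⟨P, hPdeg, hLp, hsup⟩ :=
    hC E hE hEb hstar s v U hU hEU (hv.of_le (by exact_mod_cast le_top))
  refine ⟨P, by lia, ?_, fun hs x hx ↦ ?_⟩
  · simpa [hcoord, ← pow_mul, mul_comm 2] using hLp r hrs
  · have hcast : (s : ℝ) - 1 = (s - 1 : ℕ) := (Nat.cast_pred (zero_lt_two.trans_le hs)).symm
    simpa [hcoord, hcast] using hsup (by norm_num; exact_mod_cast hs) x hx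
end

section
/- For every k ∈ ℕ with k ≥ 1 there exists a constant C > 0 (depending only on k) with the following property: let 𝒯 be any mesh of a compact interval [a,b] with elements e_i = (x_{i−1}, x_i) and maximal element length h = max_i (x_i − x_{i−1}); let v : [a,b] → ℝ be (k+1)-times continuously differentiable, and let v_b ∈ 𝕊_k(𝒯) be the piecewise Lagrange interpolant of v of degree k, i.e. on each element e_i, v_b is the unique polynomial of degree ≤ k agreeing with v at the k + 1 equispaced points of the closed element [x_{i−1}, x_i] (including the two endpoints). Then the interpolation error e = v − v_b satisfies ∫_a^b ∫_a^b (e(x) − e(y))²/(x − y)² dx dy ≤ C · h^{2k+1} · ∫_a^b |v^{(k+1)}(t)|² dt. -/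
open MeasureTheory Set

/-!
On each element the error `e = v - vb` is smooth and vanishes at `k + 1` nodes. By Rolle's theorem
the `j`-th derivative of `e` has a zero there for every `j ≤ k`, so each differentiation costs one
factor `h` in `L²` (Poincaré), down to `e^{(k+1)} = v^{(k+1)}`. Hence
`∫ e² ≤ h^{2k+2} ∫ |v^{(k+1)}|²` and `∫ e'² ≤ h^{2k} ∫ |v^{(k+1)}|²`.

The Gagliardo double integral is split at `|s - t| = h`. Near the diagonal, Cauchy–Schwarz gives
`(e(t) - e(s))² ≤ |t - s| ∫_s^t e'²`, and integrating against `1 / |t - s|²` leaves `2h ∫ e'²`.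
Away from it, `(e(t) - e(s))² ≤ 2 (e(s)² + e(t)²)` and `∫_{|x| > h} x⁻² dx = 2 / h` leave
`(8 / h) ∫ e²`. Together the two parts give the constant `2 + 8 = 10`, whatever `k` is.
-/

open scoped ENNReal Polynomial

lemma sq_lintegral_le_measure_univ_mul {α : Type*} [MeasurableSpace α] {μ : Measure α}
    {f : α → ℝ≥0∞} (hf : AEMeasurable f μ) :
    (∫⁻ x, f x ∂μ) ^ 2 ≤ μ univ * ∫⁻ x, f x ^ 2 ∂μ := by
  have hölder := ENNReal.lintegral_mul_le_Lp_mul_Lq μ Real.HolderConjugate.two_two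
    (f := fun _ => 1) aemeasurable_const hf
  simp only [Pi.mul_apply, one_mul, ENNReal.rpow_ofNat, one_pow, lintegral_one] at hölder
  calc (∫⁻ x, f x ∂μ) ^ 2
      ≤ (μ univ ^ (1 / 2 : ℝ) * (∫⁻ x, f x ^ 2 ∂μ) ^ (1 / 2 : ℝ)) ^ 2 := by gcongr
    _ = μ univ * ∫⁻ x, f x ^ 2 ∂μ := by
      rw [mul_pow, ← ENNReal.rpow_mul_natCast, ← ENNReal.rpow_mul_natCast]
      norm_num

section Increments

variable {E : Type*} [NormedAddCommGroup E] [NormedSpace ℝ E] [CompleteSpace E]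
  {f : ℝ → E} {S : Set ℝ}

lemma enorm_sub_le_lintegral_deriv_off_countable {x y : ℝ} (hS : S.Countable)
    (hcont : ContinuousOn f (uIcc x y))
    (hdiff : ∀ t ∈ Ioo (min x y) (max x y) \ S, DifferentiableAt ℝ f t) :
    ‖f y - f x‖ₑ ≤ ∫⁻ t in uIcc x y, ‖deriv f t‖ₑ := by
  by_cases htop : ∫⁻ t in uIcc x y, ‖deriv f t‖ₑ = ∞
  · exact htop ▸ le_top
  have hint : IntervalIntegrable (deriv f) volume x y :=
    (intervalIntegrable_iff' enorm_ne_top).mpr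
      ⟨aestronglyMeasurable_deriv f _, lt_top_iff_ne_top.mpr htop⟩
  rw [← integral_eq_of_hasDerivAt_off_countable f (deriv f) hS hcont
      (fun t ht => (hdiff t ht).hasDerivAt) hint, ← ofReal_norm,
    intervalIntegral.norm_intervalIntegral_eq, ofReal_norm]
  exact (enorm_integral_le_lintegral_enorm _).trans (lintegral_mono_set uIoc_subset_uIcc)

lemma enorm_sub_sq_le_lintegral_deriv_sq {x y : ℝ} (hS : S.Countable)
    (hcont : ContinuousOn f (uIcc x y))
    (hdiff : ∀ t ∈ Ioo (min x y) (max x y) \ S, DifferentiableAt ℝ f t) :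
    ‖f y - f x‖ₑ ^ 2 ≤ ‖y - x‖ₑ * ∫⁻ t in uIcc x y, ‖deriv f t‖ₑ ^ 2 := by
  calc ‖f y - f x‖ₑ ^ 2
      ≤ (∫⁻ t in uIcc x y, ‖deriv f t‖ₑ) ^ 2 := by
        gcongr
        exact enorm_sub_le_lintegral_deriv_off_countable hS hcont hdiff
    _ ≤ volume.restrict (uIcc x y) univ * ∫⁻ t in uIcc x y, ‖deriv f t‖ₑ ^ 2 :=
        sq_lintegral_le_measure_univ_mul (aestronglyMeasurable_deriv f _).enorm
    _ = ‖y - x‖ₑ * ∫⁻ t in uIcc x y, ‖deriv f t‖ₑ ^ 2 := by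
        rw [Measure.restrict_apply_univ, Real.volume_interval, Real.enorm_eq_ofReal_abs]

lemma lintegral_enorm_sq_le_of_eq_zero {c d x₀ : ℝ} (hS : S.Countable)
    (hcont : ContinuousOn f (Icc c d)) (hdiff : ∀ t ∈ Ioo c d \ S, DifferentiableAt ℝ f t)
    (hx₀ : x₀ ∈ Icc c d) (hfx₀ : f x₀ = 0) :
    ∫⁻ t in Ioo c d, ‖f t‖ₑ ^ 2 ≤
      ENNReal.ofReal (d - c) ^ 2 * ∫⁻ t in Ioo c d, ‖deriv f t‖ₑ ^ 2 := by
  have hpointwise : ∀ t ∈ Ioo c d,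
      ‖f t‖ₑ ^ 2 ≤ ENNReal.ofReal (d - c) * ∫⁻ τ in Ioo c d, ‖deriv f τ‖ₑ ^ 2 := by
    intro t ht
    have hsub : uIcc x₀ t ⊆ Icc c d := uIcc_subset_Icc hx₀ (Ioo_subset_Icc_self ht)
    have hincr := enorm_sub_sq_le_lintegral_deriv_sq (x := x₀) (y := t) hS (hcont.mono hsub)
      fun τ hτ => hdiff τ ⟨Ioo_subset_Ioo (le_min hx₀.1 ht.1.le) (max_le hx₀.2 ht.2.le) hτ.1, hτ.2⟩
    rw [hfx₀, sub_zero] at hincr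
    refine hincr.trans ?_
    rw [Real.enorm_eq_ofReal_abs, restrict_Ioo_eq_restrict_Icc]
    gcongr
    exact abs_sub_le_of_le_of_le ht.1.le ht.2.le hx₀.1 hx₀.2
  calc ∫⁻ t in Ioo c d, ‖f t‖ₑ ^ 2
      ≤ ∫⁻ _ in Ioo c d, ENNReal.ofReal (d - c) * ∫⁻ τ in Ioo c d, ‖deriv f τ‖ₑ ^ 2 :=
        setLIntegral_mono' measurableSet_Ioo hpointwise
    _ = ENNReal.ofReal (d - c) ^ 2 * ∫⁻ t in Ioo c d, ‖deriv f t‖ₑ ^ 2 := by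
        rw [setLIntegral_const, Real.volume_Ioo]
        ring

end Increments

lemma exists_strictMono_deriv_eq_zero {f : ℝ → ℝ} {c d : ℝ} (hf : ContinuousOn f (Icc c d)) {n : ℕ}
    {z : Fin (n + 1) → ℝ} (hz : StrictMono z) (hzmem : ∀ i, z i ∈ Icc c d)
    (hfz : ∀ i, f (z i) = 0) :
    ∃ y : Fin n → ℝ, StrictMono y ∧ (∀ i, y i ∈ Ioo c d) ∧ ∀ i, deriv f (y i) = 0 := by
  have hrolle (i : Fin n) : ∃ y ∈ Ioo (z i.castSucc) (z i.succ), deriv f y = 0 :=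
    exists_deriv_eq_zero (hz i.castSucc_lt_succ)
      (hf.mono (Icc_subset_Icc (hzmem _).1 (hzmem _).2)) ((hfz _).trans (hfz _).symm)
  choose y hy hderiv using hrolle
  refine ⟨y, fun i j hij => ?_, fun i => Ioo_subset_Ioo (hzmem _).1 (hzmem _).2 (hy i), hderiv⟩
  calc y i < z i.succ := (hy i).2
    _ ≤ z j.castSucc := hz.monotone (Fin.succ_le_castSucc_iff.mpr hij)
    _ < y j := (hy j).1

lemma lintegral_enorm_deriv_sq_eq_derivWithin {E : Type*} [NormedAddCommGroup E]
    [NormedSpace ℝ E] (f : ℝ → E) (c d : ℝ) :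
    ∫⁻ t in Ioo c d, ‖deriv f t‖ₑ ^ 2 = ∫⁻ t in Ioo c d, ‖derivWithin f (Icc c d) t‖ₑ ^ 2 :=
  setLIntegral_congr_fun measurableSet_Ioo fun t ht => by
    simp only [derivWithin_of_mem_nhds (Icc_mem_nhds ht.1 ht.2)]

section ManyZeros

variable {f : ℝ → ℝ} {c d : ℝ} {n : ℕ}

lemma exists_strictMono_derivWithin_eq_zero (hf : ContinuousOn f (Icc c d))
    {z : Fin (n + 1) → ℝ} (hz : StrictMono z) (hzmem : ∀ i, z i ∈ Icc c d)
    (hfz : ∀ i, f (z i) = 0) :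
    ∃ y : Fin n → ℝ, StrictMono y ∧ (∀ i, y i ∈ Icc c d) ∧
      ∀ i, derivWithin f (Icc c d) (y i) = 0 := by
  obtain ⟨y, hy, hymem, hderiv⟩ := exists_strictMono_deriv_eq_zero hf hz hzmem hfz
  refine ⟨y, hy, fun i => Ioo_subset_Icc_self (hymem i), fun i => ?_⟩
  rw [derivWithin_of_mem_nhds (Icc_mem_nhds (hymem i).1 (hymem i).2), hderiv i]

lemma lintegral_enorm_sq_le_iteratedDerivWithin (hcd : c < d) (hf : ContDiffOn ℝ n f (Icc c d))
    {z : Fin n → ℝ} (hz : StrictMono z) (hzmem : ∀ i, z i ∈ Icc c d) (hfz : ∀ i, f (z i) = 0) :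
    ∫⁻ t in Ioo c d, ‖f t‖ₑ ^ 2 ≤ ENNReal.ofReal (d - c) ^ (2 * n) *
      ∫⁻ t in Ioo c d, ‖iteratedDerivWithin n f (Icc c d) t‖ₑ ^ 2 := by
  induction n generalizing f with
  | zero => simp
  | succ n ih =>
    have hdiff : ∀ t ∈ Ioo c d \ ∅, DifferentiableAt ℝ f t := fun t ht =>
      (hf.differentiableOn (by simp)).differentiableAt (Icc_mem_nhds ht.1.1 ht.1.2)
    obtain ⟨y, hy, hymem, hderiv⟩ :=
      exists_strictMono_derivWithin_eq_zero hf.continuousOn hz hzmem hfz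
    calc ∫⁻ t in Ioo c d, ‖f t‖ₑ ^ 2
        ≤ ENNReal.ofReal (d - c) ^ 2 * ∫⁻ t in Ioo c d, ‖derivWithin f (Icc c d) t‖ₑ ^ 2 :=
          lintegral_enorm_deriv_sq_eq_derivWithin f c d ▸
            lintegral_enorm_sq_le_of_eq_zero countable_empty hf.continuousOn hdiff (hzmem 0) (hfz 0)
      _ ≤ ENNReal.ofReal (d - c) ^ 2 * (ENNReal.ofReal (d - c) ^ (2 * n) *
            ∫⁻ t in Ioo c d, ‖iteratedDerivWithin (n + 1) f (Icc c d) t‖ₑ ^ 2) := by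
          rw [iteratedDerivWithin_succ']
          gcongr
          exact ih (hf.derivWithin (uniqueDiffOn_Icc hcd) (by norm_cast)) hy hymem hderiv
      _ = _ := by ring

lemma lintegral_enorm_deriv_sq_le_iteratedDerivWithin (hcd : c < d)
    (hf : ContDiffOn ℝ (n + 1) f (Icc c d)) {z : Fin (n + 1) → ℝ} (hz : StrictMono z)
    (hzmem : ∀ i, z i ∈ Icc c d) (hfz : ∀ i, f (z i) = 0) :
    ∫⁻ t in Ioo c d, ‖deriv f t‖ₑ ^ 2 ≤ ENNReal.ofReal (d - c) ^ (2 * n) *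
      ∫⁻ t in Ioo c d, ‖iteratedDerivWithin (n + 1) f (Icc c d) t‖ₑ ^ 2 := by
  obtain ⟨y, hy, hymem, hderiv⟩ :=
    exists_strictMono_derivWithin_eq_zero hf.continuousOn hz hzmem hfz
  rw [lintegral_enorm_deriv_sq_eq_derivWithin, iteratedDerivWithin_succ']
  exact lintegral_enorm_sq_le_iteratedDerivWithin hcd
    (hf.derivWithin (uniqueDiffOn_Icc hcd) le_rfl) hy hymem hderiv

end ManyZeros

section Kernels

lemma lintegral_lintegral_sub_mul_add {G : Type*} [AddCommGroup G] [MeasurableSpace G]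
    [MeasurableAdd₂ G] [MeasurableNeg G] {μ : Measure G} [SFinite μ] [μ.IsAddLeftInvariant]
    [μ.IsNegInvariant] {K φ : G → ℝ≥0∞} (hK : Measurable K) (hφ : AEMeasurable φ μ) :
    ∫⁻ s, ∫⁻ t, K (t - s) * (φ s + φ t) ∂μ ∂μ = 2 * (∫⁻ x, K x ∂μ) * ∫⁻ x, φ x ∂μ := by
  have hKsub : Measurable fun p : G × G => K (p.2 - p.1) := by fun_prop
  have hKright (s : G) : Measurable fun t => K (t - s) := by fun_prop
  have hKleft (t : G) : Measurable fun s => K (t - s) := by fun_prop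
  have hfirst : ∫⁻ s, ∫⁻ t, K (t - s) * φ s ∂μ ∂μ = (∫⁻ x, K x ∂μ) * ∫⁻ x, φ x ∂μ := by
    simp_rw [lintegral_mul_const _ (hKright _), lintegral_sub_right_eq_self K,
      lintegral_const_mul'' _ hφ]
  have hsecond : ∫⁻ s, ∫⁻ t, K (t - s) * φ t ∂μ ∂μ = (∫⁻ x, K x ∂μ) * ∫⁻ x, φ x ∂μ := by
    rw [lintegral_lintegral_swap (hKsub.aemeasurable.mul hφ.comp_snd)]
    simp_rw [lintegral_mul_const _ (hKleft _), lintegral_sub_left_eq_self K,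
      lintegral_const_mul'' _ hφ]
  have hinner (s : G) : ∫⁻ t, K (t - s) * (φ s + φ t) ∂μ =
      ∫⁻ t, K (t - s) * φ s ∂μ + ∫⁻ t, K (t - s) * φ t ∂μ := by
    simp_rw [mul_add]
    exact lintegral_add_left ((hKright s).mul_const _) _
  have hmeas : AEMeasurable (fun s => ∫⁻ t, K (t - s) * φ s ∂μ) μ :=
    (hKsub.aemeasurable.mul hφ.comp_fst).lintegral_prod_right'
  simp_rw [hinner]
  rw [lintegral_add_left' hmeas, hfirst, hsecond]
  ring

lemma lintegral_uIcc_add_right (g : ℝ → ℝ≥0∞) (s x : ℝ) :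
    ∫⁻ τ in uIcc s (s + x), g τ = ∫⁻ τ in uIcc 0 x, g (s + τ) := by
  rw [← (measurePreserving_add_left volume s).setLIntegral_comp_preimage_emb
    (measurableEmbedding_addLeft s) g, preimage_const_add_uIcc, sub_self, add_sub_cancel_left]

variable {g : ℝ → ℝ≥0∞}

lemma lintegral_lintegral_uIcc_add_right (hg : Measurable g) (x : ℝ) :
    ∫⁻ s, ∫⁻ τ in uIcc s (s + x), g τ = ‖x‖ₑ * ∫⁻ τ, g τ := by
  simp_rw [lintegral_uIcc_add_right]
  rw [lintegral_lintegral_swap (by fun_prop)]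
  simp_rw [lintegral_add_right_eq_self g]
  rw [setLIntegral_const, Real.volume_interval, sub_zero, Real.enorm_eq_ofReal_abs, mul_comm]

lemma measurable_lintegral_uIcc (hg : Measurable g) :
    Measurable fun p : ℝ × ℝ => ∫⁻ τ in uIcc p.1 p.2, g τ := by
  have hset : MeasurableSet {q : (ℝ × ℝ) × ℝ | q.2 ∈ uIcc q.1.1 q.1.2} := by
    simpa only [mem_univ, true_and] using! measurableSet_region_between_cc
      (measurable_fst.min measurable_snd) (measurable_fst.max measurable_snd) MeasurableSet.univ
  simp_rw [← lintegral_indicator measurableSet_uIcc]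
  exact ((hg.comp measurable_snd).indicator hset).lintegral_prod_right'

lemma lintegral_lintegral_sub_mul_lintegral_uIcc {K : ℝ → ℝ≥0∞} (hK : Measurable K)
    (hg : Measurable g) :
    ∫⁻ s, ∫⁻ t, K (t - s) * ∫⁻ τ in uIcc s t, g τ = (∫⁻ x, K x * ‖x‖ₑ) * ∫⁻ τ, g τ := by
  have hmeas := measurable_lintegral_uIcc hg
  calc ∫⁻ s, ∫⁻ t, K (t - s) * ∫⁻ τ in uIcc s t, g τ
      = ∫⁻ s, ∫⁻ x, K x * ∫⁻ τ in uIcc s (s + x), g τ := by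
        refine lintegral_congr fun s => ?_
        rw [← lintegral_add_left_eq_self _ s]
        simp only [add_sub_cancel_left]
    _ = ∫⁻ x, ∫⁻ s, K x * ∫⁻ τ in uIcc s (s + x), g τ := by
        refine lintegral_lintegral_swap (Measurable.aemeasurable ?_)
        exact (hK.comp measurable_snd).mul
          (hmeas.comp (measurable_fst.prodMk (measurable_fst.add measurable_snd)))
    _ = ∫⁻ x, K x * ‖x‖ₑ * ∫⁻ τ, g τ := by
        refine lintegral_congr fun x => ?_
        have hmeas_x : Measurable fun s => ∫⁻ τ in uIcc s (s + x), g τ :=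
          hmeas.comp (measurable_id.prodMk (measurable_id.add_const x))
        rw [lintegral_const_mul _ hmeas_x, lintegral_lintegral_uIcc_add_right hg, mul_assoc]
    _ = (∫⁻ x, K x * ‖x‖ₑ) * ∫⁻ τ, g τ := lintegral_mul_const _ (by fun_prop)

end Kernels

lemma lintegral_Ioi_inv_enorm_sq {h : ℝ} (hh : 0 < h) :
    ∫⁻ x in Ioi h, (‖x‖ₑ ^ 2)⁻¹ = ENNReal.ofReal h⁻¹ := by
  have hrpow : ∫⁻ x in Ioi h, (‖x‖ₑ ^ 2)⁻¹ = ∫⁻ x in Ioi h, ENNReal.ofReal (x ^ (-2 : ℝ)) := by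
    refine setLIntegral_congr_fun measurableSet_Ioi fun x hx => ?_
    have hx₀ : 0 < x := hh.trans hx
    simp only [Real.enorm_of_nonneg hx₀.le]
    rw [← ENNReal.ofReal_pow hx₀.le, ← ENNReal.ofReal_inv_of_pos (by positivity),
      Real.rpow_neg hx₀.le, Real.rpow_two]
  have hnonneg : 0 ≤ᵐ[volume.restrict (Ioi h)] fun x : ℝ => x ^ (-2 : ℝ) := by
    filter_upwards [self_mem_ae_restrict measurableSet_Ioi] with x hx
    exact Real.rpow_nonneg (hh.trans hx).le _
  rw [hrpow, ← ofReal_integral_eq_lintegral_ofReal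
      (integrableOn_Ioi_rpow_of_lt (by norm_num) hh) hnonneg,
    integral_Ioi_rpow_of_lt (by norm_num) hh]
  norm_num [Real.rpow_neg_one]

lemma lintegral_compl_closedBall_inv_enorm_sq {h : ℝ} (hh : 0 < h) :
    ∫⁻ x in (Metric.closedBall (0 : ℝ) h)ᶜ, (‖x‖ₑ ^ 2)⁻¹ = ENNReal.ofReal (2 / h) := by
  have hcompl : (Metric.closedBall (0 : ℝ) h)ᶜ = Iio (-h) ∪ Ioi h := by
    ext x
    simp [lt_abs, lt_neg, or_comm]
  have hneg : ∫⁻ x in Iio (-h), (‖x‖ₑ ^ 2)⁻¹ = ∫⁻ x in Ioi h, (‖x‖ₑ ^ 2)⁻¹ := by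
    rw [← (Measure.measurePreserving_neg (volume : Measure ℝ)).setLIntegral_comp_preimage_emb
      (MeasurableEquiv.neg ℝ).measurableEmbedding, neg_preimage, neg_Iio, neg_neg]
    simp only [enorm_neg]
  rw [hcompl, lintegral_union measurableSet_Ioi
      (disjoint_left.mpr fun x hx hx' => by linarith [mem_Iio.mp hx, mem_Ioi.mp hx']),
    hneg, lintegral_Ioi_inv_enorm_sq hh, ← ENNReal.ofReal_add (by positivity) (by positivity)]
  congr 1
  ring

/-- The square of the Gagliardo `H^{1/2}` seminorm of `e` on `I`, as an extended nonnegative real so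
that no integrability is presupposed; the integrand is `0` on the diagonal. -/
noncomputable def gagliardoSeminormSq {E : Type*} [NormedAddCommGroup E] (e : ℝ → E) (I : Set ℝ) :
    ℝ≥0∞ :=
  ∫⁻ s in I, ∫⁻ t in I, ‖e t - e s‖ₑ ^ 2 / ‖t - s‖ₑ ^ 2

/-- The kernel `1 / |x|` cut off to `|x| ≤ h`; its value at `0` is `∞`. -/
noncomputable def nearKernel (h : ℝ) : ℝ → ℝ≥0∞ :=
  (Metric.closedBall 0 h).indicator fun x => ‖x‖ₑ⁻¹

/-- The kernel `1 / |x|²` cut off to `h < |x|`. -/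
noncomputable def farKernel (h : ℝ) : ℝ → ℝ≥0∞ :=
  (Metric.closedBall 0 h)ᶜ.indicator fun x => (‖x‖ₑ ^ 2)⁻¹

lemma measurable_nearKernel (h : ℝ) : Measurable (nearKernel h) :=
  Measurable.indicator (by fun_prop) Metric.isClosed_closedBall.measurableSet

lemma measurable_farKernel (h : ℝ) : Measurable (farKernel h) :=
  Measurable.indicator (by fun_prop) Metric.isClosed_closedBall.measurableSet.compl

lemma lintegral_nearKernel_mul_enorm_le (h : ℝ) :
    ∫⁻ x, nearKernel h x * ‖x‖ₑ ≤ ENNReal.ofReal (2 * h) := by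
  have hball := Metric.isClosed_closedBall (x := (0 : ℝ)) (ε := h) |>.measurableSet
  calc ∫⁻ x, nearKernel h x * ‖x‖ₑ
      ≤ ∫⁻ x, (Metric.closedBall (0 : ℝ) h).indicator 1 x := by
        refine lintegral_mono fun x => ?_
        rw [nearKernel, ← indicator_mul_left]
        exact indicator_le_indicator (ENNReal.inv_mul_le_one _)
    _ = ENNReal.ofReal (2 * h) := by rw [lintegral_indicator_one hball, Real.volume_closedBall]

lemma lintegral_farKernel {h : ℝ} (hh : 0 < h) :
    ∫⁻ x, farKernel h x = ENNReal.ofReal (2 / h) := by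
  rw [farKernel, lintegral_indicator Metric.isClosed_closedBall.measurableSet.compl,
    lintegral_compl_closedBall_inv_enorm_sq hh]

lemma lintegral_lintegral_kernels_le {h : ℝ} (hh : 0 < h) {φ ψ : ℝ → ℝ≥0∞} (hφ : AEMeasurable φ)
    (hψ : Measurable ψ) :
    ∫⁻ s, ∫⁻ t, (nearKernel h (t - s) * (∫⁻ τ in uIcc s t, ψ τ) +
        2 * (farKernel h (t - s) * (φ s + φ t))) ≤
      ENNReal.ofReal (2 * h) * (∫⁻ x, ψ x) + ENNReal.ofReal (8 / h) * ∫⁻ x, φ x := by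
  have hnear : Measurable fun p : ℝ × ℝ => nearKernel h (p.2 - p.1) * ∫⁻ τ in uIcc p.1 p.2, ψ τ :=
    ((measurable_nearKernel h).comp (measurable_snd.sub measurable_fst)).mul
      (measurable_lintegral_uIcc hψ)
  have hnear_right (s : ℝ) : Measurable fun t => nearKernel h (t - s) * ∫⁻ τ in uIcc s t, ψ τ :=
    hnear.comp measurable_prodMk_left
  have hnear_left : Measurable fun s => ∫⁻ t, nearKernel h (t - s) * ∫⁻ τ in uIcc s t, ψ τ :=
    hnear.lintegral_prod_right'
  have hscale : ENNReal.ofReal (8 / h) = 4 * ENNReal.ofReal (2 / h) := by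
    rw [show 8 / h = 4 * (2 / h) by ring, ENNReal.ofReal_mul (by norm_num), ENNReal.ofReal_ofNat]
  simp_rw [lintegral_add_left (hnear_right _), lintegral_const_mul' 2 _ ENNReal.ofNat_ne_top]
  rw [lintegral_add_left hnear_left, lintegral_const_mul' 2 _ ENNReal.ofNat_ne_top,
    lintegral_lintegral_sub_mul_lintegral_uIcc (measurable_nearKernel h) hψ,
    lintegral_lintegral_sub_mul_add (measurable_farKernel h) hφ, lintegral_farKernel hh, hscale,
    show 4 * ENNReal.ofReal (2 / h) * ∫⁻ x, φ x =
      2 * (2 * ENNReal.ofReal (2 / h) * ∫⁻ x, φ x) by ring]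
  gcongr
  exact lintegral_nearKernel_mul_enorm_le h

lemma ennreal_add_sq_le (a b : ℝ≥0∞) : (a + b) ^ 2 ≤ 2 * (a ^ 2 + b ^ 2) := by
  simpa [show (2 : ℝ) - 1 = 1 by norm_num] using
    ENNReal.rpow_add_le_mul_rpow_add_rpow a b one_le_two

section Gagliardo

variable {E : Type*} [NormedAddCommGroup E] {e : ℝ → E} {I S : Set ℝ}

lemma gagliardo_quotient_le_far {h s t : ℝ} (hst : t - s ∉ Metric.closedBall 0 h) :
    ‖e t - e s‖ₑ ^ 2 / ‖t - s‖ₑ ^ 2 ≤ 2 * (farKernel h (t - s) * (‖e s‖ₑ ^ 2 + ‖e t‖ₑ ^ 2)) := by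
  rw [farKernel, indicator_of_mem hst, div_eq_mul_inv, mul_left_comm, mul_comm (_ ^ 2)]
  gcongr
  calc ‖e t - e s‖ₑ ^ 2 ≤ (‖e t‖ₑ + ‖e s‖ₑ) ^ 2 := by gcongr; exact enorm_sub_le
    _ ≤ 2 * (‖e t‖ₑ ^ 2 + ‖e s‖ₑ ^ 2) := ennreal_add_sq_le _ _
    _ = 2 * (‖e s‖ₑ ^ 2 + ‖e t‖ₑ ^ 2) := by rw [add_comm (‖e t‖ₑ ^ 2)]

variable [NormedSpace ℝ E] [CompleteSpace E]

lemma gagliardo_quotient_le_near {h s t : ℝ} (hst : t - s ∈ Metric.closedBall 0 h)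
    (hS : S.Countable) (hcont : ContinuousOn e (uIcc s t))
    (hdiff : ∀ τ ∈ Ioo (min s t) (max s t) \ S, DifferentiableAt ℝ e τ) :
    ‖e t - e s‖ₑ ^ 2 / ‖t - s‖ₑ ^ 2 ≤
      nearKernel h (t - s) * ∫⁻ τ in uIcc s t, ‖deriv e τ‖ₑ ^ 2 := by
  rw [nearKernel, indicator_of_mem hst]
  rcases eq_or_ne s t with rfl | hne
  · simp
  have hpos : ‖t - s‖ₑ ≠ 0 := enorm_ne_zero.mpr (sub_ne_zero.mpr hne.symm)
  calc ‖e t - e s‖ₑ ^ 2 / ‖t - s‖ₑ ^ 2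
      ≤ ‖t - s‖ₑ * (∫⁻ τ in uIcc s t, ‖deriv e τ‖ₑ ^ 2) / ‖t - s‖ₑ ^ 2 := by
        gcongr
        exact enorm_sub_sq_le_lintegral_deriv_sq hS hcont hdiff
    _ = ‖t - s‖ₑ⁻¹ * ∫⁻ τ in uIcc s t, ‖deriv e τ‖ₑ ^ 2 := by
        rw [sq ‖t - s‖ₑ, ENNReal.mul_div_mul_left _ _ hpos enorm_ne_top, ENNReal.div_eq_inv_mul]

lemma gagliardo_quotient_le_kernels (h : ℝ) (hI : I.OrdConnected) (hS : S.Countable)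
    (hcont : ContinuousOn e I) (hdiff : ∀ t ∈ I \ S, DifferentiableAt ℝ e t) {s t : ℝ} (hs : s ∈ I)
    (ht : t ∈ I) :
    ‖e t - e s‖ₑ ^ 2 / ‖t - s‖ₑ ^ 2 ≤
      nearKernel h (t - s) * (∫⁻ τ in uIcc s t, I.indicator (fun x => ‖deriv e x‖ₑ ^ 2) τ) +
      2 * (farKernel h (t - s) *
        (I.indicator (fun x => ‖e x‖ₑ ^ 2) s + I.indicator (fun x => ‖e x‖ₑ ^ 2) t)) := by
  have hsub : uIcc s t ⊆ I := hI.uIcc_subset hs ht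
  rw [setLIntegral_congr_fun measurableSet_uIcc fun τ hτ => indicator_of_mem (hsub hτ) _,
    indicator_of_mem hs, indicator_of_mem ht]
  by_cases hst : t - s ∈ Metric.closedBall 0 h
  · exact (gagliardo_quotient_le_near hst hS (hcont.mono hsub)
      fun τ hτ => hdiff τ ⟨hsub (Ioo_subset_Icc_self hτ.1), hτ.2⟩).trans le_self_add
  · exact (gagliardo_quotient_le_far hst).trans le_add_self

lemma gagliardoSeminormSq_le {h : ℝ} (hh : 0 < h) (hI : I.OrdConnected) (hS : S.Countable)
    (hcont : ContinuousOn e I) (hdiff : ∀ t ∈ I \ S, DifferentiableAt ℝ e t) :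
    gagliardoSeminormSq e I ≤
      ENNReal.ofReal (2 * h) * (∫⁻ t in I, ‖deriv e t‖ₑ ^ 2) +
      ENNReal.ofReal (8 / h) * ∫⁻ t in I, ‖e t‖ₑ ^ 2 := by
  have hImeas : MeasurableSet I := hI.measurableSet
  have hφ : AEMeasurable (I.indicator fun x => ‖e x‖ₑ ^ 2) :=
    (aemeasurable_indicator_iff hImeas).mpr
      ((hcont.aestronglyMeasurable hImeas).enorm.pow_const 2)
  have hψ : Measurable (I.indicator fun x => ‖deriv e x‖ₑ ^ 2) :=
    ((stronglyMeasurable_deriv e).enorm.pow_const 2).indicator hImeas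
  rw [← lintegral_indicator hImeas, ← lintegral_indicator hImeas]
  refine le_trans ?_ (lintegral_lintegral_kernels_le hh hφ hψ)
  exact (setLIntegral_mono' hImeas fun s hs =>
    (setLIntegral_mono' hImeas fun t ht =>
      gagliardo_quotient_le_kernels h hI hS hcont hdiff hs ht).trans
        (setLIntegral_le_lintegral _ _)).trans (setLIntegral_le_lintegral _ _)

end Gagliardo

lemma ofReal_integral_integral_le_gagliardoSeminormSq (e : ℝ → ℝ) (I : Set ℝ) :
    ENNReal.ofReal (∫ s in I, ∫ t in I, (e s - e t) ^ 2 / (s - t) ^ 2) ≤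
      gagliardoSeminormSq e I := by
  refine (Real.ofReal_le_enorm _).trans ?_
  refine (enorm_integral_le_lintegral_enorm _).trans (lintegral_mono fun s => ?_)
  refine (enorm_integral_le_lintegral_enorm _).trans (lintegral_mono fun t => ?_)
  rcases eq_or_ne s t with rfl | hne
  · simp
  rw [enorm_sub_rev (e t), enorm_sub_rev t, div_eq_mul_inv, div_eq_mul_inv, enorm_mul,
    enorm_inv (pow_ne_zero 2 (sub_ne_zero.mpr hne)), enorm_pow, enorm_pow]

section Mesh

lemma monotoneOn_Iic_of_le_succ {α : Type*} [Preorder α] {ξ : ℕ → α} {r : ℕ}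
    (hξ : ∀ i < r, ξ i ≤ ξ (i + 1)) : MonotoneOn ξ (Iic r) :=
  monotoneOn_of_le_succ ordConnected_Iic fun i _ _ hi => hξ i hi

lemma exists_mem_Ioo_mesh {α : Type*} [LinearOrder α] {ξ : ℕ → α} {r : ℕ} {t : α}
    (ht : t ∈ Ioo (ξ 0) (ξ r) \ ξ '' Iic r) : ∃ i < r, t ∈ Ioo (ξ i) (ξ (i + 1)) := by
  obtain ⟨i, hi, hti⟩ := mem_iUnion₂.mp (Ioc_subset_biUnion_Ioc r ξ (Ioo_subset_Ioc_self ht.1))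
  have hir : i < r := Finset.mem_range.mp hi
  exact ⟨i, hir, hti.1, hti.2.lt_of_ne fun hnode => ht.2 ⟨i + 1, hir, hnode.symm⟩⟩

variable {ξ : ℕ → ℝ} {r : ℕ}

lemma lintegral_Ioo_eq_sum_mesh (hξ : MonotoneOn ξ (Iic r)) (f : ℝ → ℝ≥0∞) :
    ∫⁻ t in Ioo (ξ 0) (ξ r), f t = ∑ i ∈ Finset.range r, ∫⁻ t in Ioo (ξ i) (ξ (i + 1)), f t := by
  induction r with
  | zero => simp
  | succ r ih =>
    have hξ₀ : ξ 0 ≤ ξ r := hξ (Nat.zero_le _) r.le_succ r.zero_le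
    have hξr : ξ r ≤ ξ (r + 1) := hξ r.le_succ self_mem_Iic r.le_succ
    rw [Finset.sum_range_succ, ← ih (hξ.mono (Iic_subset_Iic.mpr r.le_succ))]
    simp only [restrict_Ioo_eq_restrict_Ioc]
    rw [← Ioc_union_Ioc_eq_Ioc hξ₀ hξr, lintegral_union measurableSet_Ioc
      (Ioc_disjoint_Ioc_of_le le_rfl)]

lemma lintegral_Ioo_le_of_mesh (hξ : MonotoneOn ξ (Iic r)) {f g : ℝ → ℝ≥0∞} {K : ℝ≥0∞}
    (hfg : ∀ i < r, ∫⁻ t in Ioo (ξ i) (ξ (i + 1)), f t ≤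
      K * ∫⁻ t in Ioo (ξ i) (ξ (i + 1)), g t) :
    ∫⁻ t in Ioo (ξ 0) (ξ r), f t ≤ K * ∫⁻ t in Ioo (ξ 0) (ξ r), g t := by
  rw [lintegral_Ioo_eq_sum_mesh hξ, lintegral_Ioo_eq_sum_mesh hξ, Finset.mul_sum]
  exact Finset.sum_le_sum fun i hi => hfg i (Finset.mem_range.mp hi)

end Mesh

section IteratedDeriv

variable {𝕜 : Type*} [NontriviallyNormedField 𝕜]

lemma contDiff_polynomial_eval (p : 𝕜[X]) (n : WithTop ℕ∞) : ContDiff 𝕜 n fun x => p.eval x :=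
  p.contDiff_aeval n

lemma iteratedDeriv_polynomial_eval (p : 𝕜[X]) (n : ℕ) :
    iteratedDeriv n (fun x => p.eval x) = fun x => (Polynomial.derivative^[n] p).eval x := by
  induction n generalizing p with
  | zero => simp
  | succ n ih =>
    have hderiv : deriv (fun x => p.eval x) = fun x => p.derivative.eval x :=
      funext fun x => p.deriv
    rw [iteratedDeriv_succ', hderiv, ih, Function.iterate_succ_apply]

lemma iteratedDerivWithin_polynomial_eval_eq_zero {s : Set 𝕜} (hs : UniqueDiffOn 𝕜 s) {p : 𝕜[X]}
    {n : ℕ} (hp : p.natDegree < n) {x : 𝕜} (hx : x ∈ s) :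
    iteratedDerivWithin n (fun x => p.eval x) s x = 0 := by
  rw [iteratedDerivWithin_eq_iteratedDeriv hs (contDiff_polynomial_eval p _).contDiffAt hx,
    iteratedDeriv_polynomial_eval, Polynomial.iterate_derivative_eq_zero hp]
  exact Polynomial.eval_zero

lemma iteratedDerivWithin_eq_of_mem_nhds {F : Type*} [NormedAddCommGroup F] [NormedSpace 𝕜 F]
    {f : 𝕜 → F} {s t : Set 𝕜} {x : 𝕜} (hs : s ∈ nhds x) (ht : t ∈ nhds x) (n : ℕ) :
    iteratedDerivWithin n f s x = iteratedDerivWithin n f t x := by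
  have hst : s =ᶠ[nhds x] t := by
    filter_upwards [hs, ht] with y hys hyt using propext ⟨fun _ => hyt, fun _ => hys⟩
  rw [iteratedDerivWithin, iteratedDerivWithin, iteratedFDerivWithin_congr_set hst]

end IteratedDeriv

/-- On `s`, the function `w` is a polynomial of degree at most `k` that interpolates `v` at `k + 1`
distinct nodes of `s`. The nodes are listed in increasing order, and need not be equispaced. -/
def IsLagrangeInterpolantOn (k : ℕ) (v w : ℝ → ℝ) (s : Set ℝ) : Prop :=
  ∃ p : ℝ[X], p.natDegree ≤ k ∧ (∀ t ∈ s, w t = p.eval t) ∧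
    ∃ z : Fin (k + 1) → ℝ, StrictMono z ∧ (∀ j, z j ∈ s) ∧ ∀ j, p.eval (z j) = v (z j)

lemma isLagrangeInterpolantOn_of_equispaced {k : ℕ} (hk : 1 ≤ k) {v w : ℝ → ℝ} {c d : ℝ}
    (hcd : c < d) {p : ℝ[X]} (hp : p.natDegree ≤ k) (hwp : ∀ t ∈ Icc c d, w t = p.eval t)
    (hpv : ∀ j ≤ k, p.eval (c + (j : ℝ) * (d - c) / k) = v (c + (j : ℝ) * (d - c) / k)) :
    IsLagrangeInterpolantOn k v w (Icc c d) := by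
  have hk₀ : (0 : ℝ) < k := by exact_mod_cast hk
  have := sub_pos.mpr hcd
  refine ⟨p, hp, hwp, fun j => c + (j : ℝ) * (d - c) / k, fun i j hij => ?_, fun j => ⟨?_, ?_⟩,
    fun j => hpv j j.is_le⟩
  · have hcast : ((i : ℕ) : ℝ) < (j : ℕ) := by exact_mod_cast hij
    dsimp only
    gcongr
  · have : 0 ≤ (j : ℝ) * (d - c) / k := by positivity
    linarith
  · have hcast : ((j : ℕ) : ℝ) ≤ k := by exact_mod_cast j.is_le
    have : (j : ℝ) * (d - c) / k ≤ d - c := by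
      rw [div_le_iff₀ hk₀, mul_comm]
      gcongr
    linarith

namespace IsLagrangeInterpolantOn

variable {k : ℕ} {v w : ℝ → ℝ} {s : Set ℝ} {c d : ℝ}

lemma contDiffOn_sub {n : WithTop ℕ∞} (hw : IsLagrangeInterpolantOn k v w s)
    (hv : ContDiffOn ℝ n v s) : ContDiffOn ℝ n (v - w) s := by
  obtain ⟨p, -, hwp, -⟩ := hw
  exact hv.sub ((contDiff_polynomial_eval p _).contDiffOn.congr hwp)

lemma exists_strictMono_sub_eq_zero (hw : IsLagrangeInterpolantOn k v w s) :
    ∃ z : Fin (k + 1) → ℝ, StrictMono z ∧ (∀ j, z j ∈ s) ∧ ∀ j, (v - w) (z j) = 0 := by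
  obtain ⟨p, -, hwp, z, hz, hzmem, hpv⟩ := hw
  exact ⟨z, hz, hzmem, fun j => by rw [Pi.sub_apply, hwp _ (hzmem j), hpv j, sub_self]⟩

lemma iteratedDerivWithin_sub_eq (hw : IsLagrangeInterpolantOn k v w s) (hs : UniqueDiffOn ℝ s)
    (hv : ContDiffOn ℝ (k + 1) v s) {t : ℝ} (ht : t ∈ s) :
    iteratedDerivWithin (k + 1) (v - w) s t = iteratedDerivWithin (k + 1) v s t := by
  obtain ⟨p, hp, hwp, -⟩ := hw
  rw [iteratedDerivWithin_congr (g := v - fun x => p.eval x)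
      (fun x hx => by simp only [Pi.sub_apply, hwp x hx]) ht,
    iteratedDerivWithin_sub ht hs (by exact_mod_cast hv t ht)
      (contDiff_polynomial_eval p _).contDiffWithinAt,
    iteratedDerivWithin_polynomial_eval_eq_zero hs (Nat.lt_succ_of_le hp) ht, sub_zero]

lemma lintegral_enorm_iteratedDerivWithin_sub_sq (hw : IsLagrangeInterpolantOn k v w (Icc c d))
    (hcd : c < d) (hs : Icc c d ⊆ s) (hv : ContDiffOn ℝ (k + 1) v s) :
    ∫⁻ t in Ioo c d, ‖iteratedDerivWithin (k + 1) (v - w) (Icc c d) t‖ₑ ^ 2 =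
      ∫⁻ t in Ioo c d, ‖iteratedDerivWithin (k + 1) v s t‖ₑ ^ 2 := by
  refine setLIntegral_congr_fun measurableSet_Ioo fun t ht => ?_
  have hnhds : Icc c d ∈ nhds t := Icc_mem_nhds ht.1 ht.2
  simp only [hw.iteratedDerivWithin_sub_eq (uniqueDiffOn_Icc hcd) (hv.mono hs)
    (Ioo_subset_Icc_self ht),
    iteratedDerivWithin_eq_of_mem_nhds hnhds (Filter.mem_of_superset hnhds hs)]

variable {h : ℝ}

lemma lintegral_enorm_sub_sq_le (hw : IsLagrangeInterpolantOn k v w (Icc c d)) (hcd : c < d)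
    (hh : d - c ≤ h) (hs : Icc c d ⊆ s) (hv : ContDiffOn ℝ (k + 1) v s) :
    ∫⁻ t in Ioo c d, ‖(v - w) t‖ₑ ^ 2 ≤ ENNReal.ofReal h ^ (2 * (k + 1)) *
      ∫⁻ t in Ioo c d, ‖iteratedDerivWithin (k + 1) v s t‖ₑ ^ 2 := by
  obtain ⟨z, hz, hzmem, hzero⟩ := hw.exists_strictMono_sub_eq_zero
  rw [← hw.lintegral_enorm_iteratedDerivWithin_sub_sq hcd hs hv]
  refine (lintegral_enorm_sq_le_iteratedDerivWithin hcd
    (by exact_mod_cast hw.contDiffOn_sub (hv.mono hs)) hz hzmem hzero).trans ?_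
  gcongr

lemma lintegral_enorm_deriv_sub_sq_le (hw : IsLagrangeInterpolantOn k v w (Icc c d)) (hcd : c < d)
    (hh : d - c ≤ h) (hs : Icc c d ⊆ s) (hv : ContDiffOn ℝ (k + 1) v s) :
    ∫⁻ t in Ioo c d, ‖deriv (v - w) t‖ₑ ^ 2 ≤ ENNReal.ofReal h ^ (2 * k) *
      ∫⁻ t in Ioo c d, ‖iteratedDerivWithin (k + 1) v s t‖ₑ ^ 2 := by
  obtain ⟨z, hz, hzmem, hzero⟩ := hw.exists_strictMono_sub_eq_zero
  rw [← hw.lintegral_enorm_iteratedDerivWithin_sub_sq hcd hs hv]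
  refine (lintegral_enorm_deriv_sq_le_iteratedDerivWithin hcd
    (hw.contDiffOn_sub (hv.mono hs)) hz hzmem hzero).trans ?_
  gcongr

end IsLagrangeInterpolantOn

lemma ofReal_integral_sq_eq_lintegral_enorm_sq {c d : ℝ} {f : ℝ → ℝ}
    (hf : ContinuousOn f (Icc c d)) :
    ENNReal.ofReal (∫ t in Ioo c d, f t ^ 2) = ∫⁻ t in Ioo c d, ‖f t‖ₑ ^ 2 := by
  have hint : IntegrableOn (fun t => f t ^ 2) (Ioo c d) :=
    (hf.pow 2).integrableOn_Icc.mono_set Ioo_subset_Icc_self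
  rw [ofReal_integral_eq_lintegral_ofReal hint (ae_of_all _ fun t => sq_nonneg (f t))]
  refine lintegral_congr fun t => ?_
  rw [← enorm_pow, Real.enorm_of_nonneg (sq_nonneg _)]

section PiecewiseLagrange

variable {k r : ℕ} {ξ : ℕ → ℝ} {v w : ℝ → ℝ} {h : ℝ}

lemma gagliardoSeminormSq_sub_le_of_isLagrangeInterpolantOn (hh : 0 < h)
    (hξ : ∀ i < r, ξ i < ξ (i + 1)) (hξh : ∀ i < r, ξ (i + 1) - ξ i ≤ h)
    (hv : ContDiffOn ℝ (k + 1) v (Icc (ξ 0) (ξ r))) (hw : ContinuousOn w (Icc (ξ 0) (ξ r)))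
    (hinterp : ∀ i < r, IsLagrangeInterpolantOn k v w (Icc (ξ i) (ξ (i + 1)))) :
    gagliardoSeminormSq (v - w) (Ioo (ξ 0) (ξ r)) ≤ ENNReal.ofReal (10 * h ^ (2 * k + 1)) *
      ∫⁻ t in Ioo (ξ 0) (ξ r), ‖iteratedDerivWithin (k + 1) v (Icc (ξ 0) (ξ r)) t‖ₑ ^ 2 := by
  have hmono : MonotoneOn ξ (Iic r) := monotoneOn_Iic_of_le_succ fun i hi => (hξ i hi).le
  have hsub (i : ℕ) (hi : i < r) : Icc (ξ i) (ξ (i + 1)) ⊆ Icc (ξ 0) (ξ r) :=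
    Icc_subset_Icc (hmono (Nat.zero_le _) hi.le i.zero_le) (hmono hi self_mem_Iic hi)
  have hdiff : ∀ t ∈ Ioo (ξ 0) (ξ r) \ ξ '' Iic r, DifferentiableAt ℝ (v - w) t := by
    intro t ht
    obtain ⟨i, hi, hti⟩ := exists_mem_Ioo_mesh ht
    exact ((hinterp i hi).contDiffOn_sub (hv.mono (hsub i hi))).differentiableOn (by simp)
      |>.differentiableAt (Icc_mem_nhds hti.1 hti.2)
  set J := ∫⁻ t in Ioo (ξ 0) (ξ r), ‖iteratedDerivWithin (k + 1) v (Icc (ξ 0) (ξ r)) t‖ₑ ^ 2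
  calc gagliardoSeminormSq (v - w) (Ioo (ξ 0) (ξ r))
      ≤ ENNReal.ofReal (2 * h) * (∫⁻ t in Ioo (ξ 0) (ξ r), ‖deriv (v - w) t‖ₑ ^ 2) +
          ENNReal.ofReal (8 / h) * ∫⁻ t in Ioo (ξ 0) (ξ r), ‖(v - w) t‖ₑ ^ 2 :=
        gagliardoSeminormSq_le hh ordConnected_Ioo (Countable.image (to_countable _) ξ)
          ((hv.continuousOn.sub hw).mono Ioo_subset_Icc_self) hdiff
    _ ≤ ENNReal.ofReal (2 * h) * (ENNReal.ofReal h ^ (2 * k) * J) +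
          ENNReal.ofReal (8 / h) * (ENNReal.ofReal h ^ (2 * (k + 1)) * J) := by
        gcongr
        · exact lintegral_Ioo_le_of_mesh hmono fun i hi =>
            (hinterp i hi).lintegral_enorm_deriv_sub_sq_le (hξ i hi) (hξh i hi) (hsub i hi) hv
        · exact lintegral_Ioo_le_of_mesh hmono fun i hi =>
            (hinterp i hi).lintegral_enorm_sub_sq_le (hξ i hi) (hξh i hi) (hsub i hi) hv
    _ = ENNReal.ofReal (10 * h ^ (2 * k + 1)) * J := by
        rw [← mul_assoc, ← mul_assoc, ← add_mul, ← ENNReal.ofReal_pow hh.le,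
          ← ENNReal.ofReal_pow hh.le, ← ENNReal.ofReal_mul (by positivity),
          ← ENNReal.ofReal_mul (by positivity),
          ← ENNReal.ofReal_add (by positivity) (by positivity)]
        congr 2
        field_simp
        ring

theorem lagrange_interpolation_gagliardo_error_general (hr : 0 < r)
    (hξ : ∀ i < r, ξ i < ξ (i + 1)) (hξh : ∀ i < r, ξ (i + 1) - ξ i ≤ h)
    (hv : ContDiffOn ℝ (k + 1) v (Icc (ξ 0) (ξ r))) (hw : ContinuousOn w (Icc (ξ 0) (ξ r)))
    (hinterp : ∀ i < r, IsLagrangeInterpolantOn k v w (Icc (ξ i) (ξ (i + 1)))) :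
    ∫ s in Ioo (ξ 0) (ξ r), ∫ t in Ioo (ξ 0) (ξ r),
        ((v s - w s) - (v t - w t)) ^ 2 / (s - t) ^ 2 ≤
      10 * h ^ (2 * k + 1) *
        ∫ t in Ioo (ξ 0) (ξ r), iteratedDerivWithin (k + 1) v (Icc (ξ 0) (ξ r)) t ^ 2 := by
  have hh : 0 < h := (sub_pos.mpr (hξ 0 hr)).trans_le (hξh 0 hr)
  have hlt : ξ 0 < ξ r :=
    (hξ 0 hr).trans_le (monotoneOn_Iic_of_le_succ (fun i hi => (hξ i hi).le) hr self_mem_Iic hr)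
  have hD : ContinuousOn (iteratedDerivWithin (k + 1) v (Icc (ξ 0) (ξ r))) (Icc (ξ 0) (ξ r)) :=
    hv.continuousOn_iteratedDerivWithin (by norm_cast) (uniqueDiffOn_Icc hlt)
  have hgagliardo := (ofReal_integral_integral_le_gagliardoSeminormSq (v - w) _).trans
    (gagliardoSeminormSq_sub_le_of_isLagrangeInterpolantOn hh hξ hξh hv hw hinterp)
  rwa [← ofReal_integral_sq_eq_lintegral_enorm_sq hD, ← ENNReal.ofReal_mul (by positivity),
    ENNReal.ofReal_le_ofReal_iff (by positivity)] at hgagliardo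

end PiecewiseLagrange

/-- For every `k ≥ 1` there is `C > 0` (depending only on `k`) such that:
for every mesh of a compact interval `[a,b]` with maximal element length `h`, every
`(k+1)`-times continuously differentiable `v : [a,b] → ℝ`, and its piecewise Lagrange
interpolant `vb` of degree `k` (on each element, the unique polynomial of degree `≤ k`
agreeing with `v` at the `k+1` equispaced points of the closed element), the interpolation
error `e = v - vb` satisfies `|e|²_{1/2,(a,b)} ≤ C · h^{2k+1} · ∫_a^b |v^{(k+1)}|²`. -/
theorem lagrange_interpolation_gagliardo_error (k : ℕ) (hk : 1 ≤ k) :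
    ∃ C : ℝ, 0 < C ∧
      ∀ (a b : ℝ) (_hab : a < b) (r : ℕ) (hr : 0 < r) (ξ : ℕ → ℝ)
        (_h0 : ξ 0 = a) (_hr' : ξ r = b) (_hmono : ∀ i < r, ξ i < ξ (i + 1))
        (v vb : ℝ → ℝ)
        (_hv : ContDiffOn ℝ (k + 1) v (Icc a b))
        (_hvb : ContinuousOn vb (Icc a b))
        -- `vb` is the piecewise Lagrange interpolant of `v` of degree `k`
        (_hinterp : ∀ i < r, ∃ p : Polynomial ℝ, p.natDegree ≤ k ∧
          (∀ t ∈ Icc (ξ i) (ξ (i + 1)), vb t = p.eval t) ∧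
          (∀ j ≤ k, p.eval (ξ i + (j : ℝ) * (ξ (i + 1) - ξ i) / k) =
            v (ξ i + (j : ℝ) * (ξ (i + 1) - ξ i) / k))),
        (∫ s in Ioo a b, ∫ t in Ioo a b,
            ((v s - vb s) - (v t - vb t)) ^ 2 / (s - t) ^ 2) ≤
          C * ((Finset.range r).sup' (Finset.nonempty_range_iff.mpr hr.ne')
                fun i => ξ (i + 1) - ξ i) ^ (2 * k + 1) *
            (∫ t in Ioo a b, (iteratedDerivWithin (k + 1) v (Icc a b) t) ^ 2) := by
  refine ⟨10, by norm_num, ?_⟩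
  rintro _ _ - r hr ξ rfl rfl hmono v vb hv hvb hinterp
  refine lagrange_interpolation_gagliardo_error_general hr hmono (fun i hi => ?_) hv hvb
    fun i hi => ?_
  · exact Finset.le_sup' (fun i => ξ (i + 1) - ξ i) (Finset.mem_range.mpr hi)
  · obtain ⟨p, hp, hvbp, hpv⟩ := hinterp i hi
    exact isLagrangeInterpolantOn_of_equispaced hk (hmono i hi) hp hvbp hpv
end
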